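/- arXiv:1104.3543 — 3 statements merged into one kernel-verified Lean document; each statement's English description precedes it below -/
import Mathlib

section
/- Let 𝒲 = [e_n] be a Banach space with a Schauder basis, and let 𝒳 = [x_n] and 𝒴 = [y_n] be block subspaces of 𝒲 such that x_n ∈ 𝒴 for all but finitely many n. If 𝒴 = [y_n] is α-minimal, then 𝒳 = [x_n] is α-minimal. In particular, α-minimality is preserved by passing to block subspaces. -/
open Filter Topology

namespace Rosendal

variable {𝒲 : Type} [NormedAddCommGroup 𝒲] [NormedSpace ℝ 𝒲]

/-- `(e n)` is a Schauder basis of the Banach space `𝒲`: every vector has a unique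
representation as a norm-convergent series `∑ a n • e n`. -/
def IsSchauderBasis (e : ℕ → 𝒲) : Prop :=
  ∀ x : 𝒲, ∃! a : ℕ → ℝ,
    Tendsto (fun N => ∑ i ∈ Finset.range N, a i • e i) atTop (𝓝 x)

/-- `x` is a linear combination of the vectors `b i`, `i ∈ s`. -/
def SuppIn (b : ℕ → 𝒲) (x : 𝒲) (s : Finset ℕ) : Prop :=
  ∃ a : ℕ → ℝ, x = ∑ i ∈ s, a i • b i

/-- `(y n)` is a block sequence with respect to the basic sequence `(b n)`: a sequence of
nonzero finite linear combinations of the `b i` with successive supports. -/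
def IsBlockSeq (b : ℕ → 𝒲) (y : ℕ → 𝒲) : Prop :=
  (∀ n, y n ≠ 0) ∧
  ∃ D : ℕ → Finset ℕ, (∀ n, SuppIn b (y n) (D n)) ∧
    ∀ n, ∀ i ∈ D n, ∀ j ∈ D (n + 1), i < j

/-- The closed linear span of a set. -/
noncomputable def closedSpan (S : Set 𝒲) : Submodule ℝ 𝒲 :=
  (Submodule.span ℝ S).topologicalClosure

/-- `(x i)_{i<k} ∼_K (y i)_{i<k}`:
`(1/K)‖∑ a i • x i‖ ≤ ‖∑ a i • y i‖ ≤ K‖∑ a i • x i‖` for all scalars. -/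
def SeqEquiv (K : ℝ) (k : ℕ) (x y : ℕ → 𝒲) : Prop :=
  ∀ a : ℕ → ℝ,
    (1 / K) * ‖∑ i ∈ Finset.range k, a i • x i‖ ≤ ‖∑ i ∈ Finset.range k, a i • y i‖ ∧
    ‖∑ i ∈ Finset.range k, a i • y i‖ ≤ K * ‖∑ i ∈ Finset.range k, a i • x i‖

/-- The tree `T((x n), Y, K)` of finite sequences `(y 0, …, y k)` of vectors of `Y` that are
`K`-equivalent to `(x 0, …, x k)`, ordered by end-extension. -/
def embTree (x : ℕ → 𝒲) (Y : Set 𝒲) (K : ℝ) : Set (List 𝒲) :=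
  {l | (∀ v ∈ l, v ∈ Y) ∧ SeqEquiv K l.length (fun i => l.getD i 0) x}

open Classical in
/-- The rank of a tree of finite sequences: if the proper end-extension relation is
well-founded (equivalently, for trees, there is no infinite branch), this is
`sup { ρ(s) + 1 : s ∈ T }` where `ρ` is the usual rank function; otherwise it is `∞ = ⊤`. -/
noncomputable def treeRank (T : Set (List 𝒲)) : WithTop Ordinal :=
  if h : WellFounded (fun t s : T => s.val <+: t.val ∧ s.val ≠ t.val) then
    ((⨆ s : T, Order.succ ((h.apply s).rank) : Ordinal) : WithTop Ordinal)
  else ⊤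

open Classical in
/-- The embeddability index `Emb((x n), Y) = sup_{K ≥ 1} rank T((x n), Y, K)`. -/
noncomputable def embIndex (x : ℕ → 𝒲) (Y : Set 𝒲) : WithTop Ordinal :=
  if ∃ K : ℝ, 1 ≤ K ∧ treeRank (embTree x Y K) = ⊤ then ⊤
  else ((sSup {o : Ordinal | ∃ K : ℝ, 1 ≤ K ∧
      (o : WithTop Ordinal) = treeRank (embTree x Y K)} : Ordinal) : WithTop Ordinal)

/-- `(I m)` is a sequence of successive nonempty finite intervals `I 0 < I 1 < …` of `ℕ`. -/
def IntervalSeq (I : ℕ → Finset ℕ) : Prop :=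
  (∀ m, ∃ a b : ℕ, a ≤ b ∧ I m = Finset.Icc a b) ∧
  ∀ m, ∀ i ∈ I m, ∀ j ∈ I (m + 1), i < j

/-- The closed subspace `[b n : n ∉ ⋃_{m ∈ A} I m]`. -/
noncomputable def residualSpace (b : ℕ → 𝒲) (I : ℕ → Finset ℕ) (A : Set ℕ) :
    Submodule ℝ 𝒲 :=
  closedSpan {v | ∃ n : ℕ, (∀ m ∈ A, n ∉ I m) ∧ v = b n}

/-- The space `[b n]` with its basis `(b n)` is `α`-tight. -/
def IsAlphaTight (b : ℕ → 𝒲) (α : Ordinal) : Prop :=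
  ∀ y : ℕ → 𝒲, IsBlockSeq b y →
    ∃ I : ℕ → Finset ℕ, IntervalSeq I ∧
      ∀ A : Set ℕ, A.Infinite →
        embIndex y (residualSpace b I A : Set 𝒲) ≤ (α : WithTop Ordinal)

/-- The space `[b n]` with its basis `(b n)` is `α`-minimal: every block subspace `[z n]`
`α`-embeds into every infinite-dimensional subspace `Y ⊆ [b n]`. -/
def IsAlphaMinimal (b : ℕ → 𝒲) (α : Ordinal) : Prop :=
  ∀ z : ℕ → 𝒲, IsBlockSeq b z →
    ∀ Y : Submodule ℝ 𝒲, (Y : Set 𝒲) ⊆ (closedSpan (Set.range b) : Set 𝒲) →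
      ¬FiniteDimensional ℝ Y →
        (α : WithTop Ordinal) ≤ embIndex z (Y : Set 𝒲)

/-- `X` embeds isomorphically into `Y` (as an isomorphism onto its image). -/
def LinIsoEmbeds (X Y : Submodule ℝ 𝒲) : Prop :=
  ∃ T : X →ₗ[ℝ] 𝒲, (∀ v : X, T v ∈ Y) ∧
    ∃ c C : ℝ, 0 < c ∧ ∀ v : X, c * ‖v‖ ≤ ‖T v‖ ∧ ‖T v‖ ≤ C * ‖v‖

/-- `X` is a minimal space: it embeds isomorphically into every infinite-dimensional
closed subspace of itself. -/
def IsMinimalSpace (X : Submodule ℝ 𝒲) : Prop :=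
  ∀ Y : Submodule ℝ 𝒲, Y ≤ X → IsClosed (Y : Set 𝒲) → ¬FiniteDimensional ℝ Y →
    LinIsoEmbeds X Y

/-- `F` embeds into `Y` with constant `K`. -/
def KEmbeds (K : ℝ) (F Y : Submodule ℝ 𝒲) : Prop :=
  ∃ T : F →ₗ[ℝ] 𝒲, (∀ v : F, T v ∈ Y) ∧
    ∀ v : F, (1 / K) * ‖v‖ ≤ ‖T v‖ ∧ ‖T v‖ ≤ K * ‖v‖

end Rosendal

namespace Rosendal

/-- existence of continuous biorthogonal functionals -/
theorem biorth_of_schauder {𝒲 : Type} [NormedAddCommGroup 𝒲] [NormedSpace ℝ 𝒲] [CompleteSpace 𝒲]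
    (e : ℕ → 𝒲) (he : IsSchauderBasis e) :
    ∃ φ : ℕ → (𝒲 →L[ℝ] ℝ), ∀ i j, φ i (e j) = if i = j then 1 else 0 := by
  classical
  let E : Submodule ℝ C(OnePoint ℕ, 𝒲) :=
    { carrier := {u | u ((0 : ℕ) : OnePoint ℕ) = 0 ∧
        ∀ n : ℕ, u ((n + 1 : ℕ) : OnePoint ℕ) - u (n : OnePoint ℕ) ∈ Submodule.span ℝ {e n}}
      add_mem' := by
        rintro u v ⟨hu0, hu⟩ ⟨hv0, hv⟩
        refine ⟨by simp [hu0, hv0], fun n => ?_⟩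
        have := Submodule.add_mem _ (hu n) (hv n)
        rw [ContinuousMap.add_apply, ContinuousMap.add_apply, add_sub_add_comm]
        exact this
      zero_mem' := ⟨by simp, fun n => by simp⟩
      smul_mem' := by
        rintro c u ⟨hu0, hu⟩
        refine ⟨by simp [hu0], fun n => ?_⟩
        have := Submodule.smul_mem _ c (hu n)
        rw [ContinuousMap.smul_apply, ContinuousMap.smul_apply, ← smul_sub]
        exact this }
  have hclosed : IsClosed (E : Set C(OnePoint ℕ, 𝒲)) := by
    have : (E : Set C(OnePoint ℕ, 𝒲)) = {u | u ((0 : ℕ) : OnePoint ℕ) = 0} ∩ ⋂ n : ℕ,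
        {u | u ((n + 1 : ℕ) : OnePoint ℕ) - u (n : OnePoint ℕ) ∈ Submodule.span ℝ {e n}} := by
      ext u
      simp only [Set.mem_inter_iff, Set.mem_iInter]
      exact Iff.rfl
    rw [this]
    refine IsClosed.inter ?_ (isClosed_iInter fun n => ?_)
    · exact isClosed_eq (continuous_eval_const _) continuous_const
    · have hc : Continuous fun u : C(OnePoint ℕ, 𝒲) =>
          u ((n + 1 : ℕ) : OnePoint ℕ) - u (n : OnePoint ℕ) :=
        (continuous_eval_const _).sub (continuous_eval_const _)
      exact (Submodule.closed_of_finiteDimensional (Submodule.span ℝ {e n})).preimage hc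
  have : CompleteSpace E := hclosed.completeSpace_coe
  -- partial sums
  have hmk : ∀ (a : ℕ → ℝ) (w : 𝒲),
      Tendsto (fun N => ∑ i ∈ Finset.range N, a i • e i) atTop (𝓝 w) →
      ∃ u : E, u.1 OnePoint.infty = w ∧
        ∀ n : ℕ, u.1 (n : OnePoint ℕ) = ∑ i ∈ Finset.range n, a i • e i := by
    intro a w h
    refine ⟨⟨OnePoint.continuousMapMkNat _ w h, ?_, ?_⟩, rfl, fun n => rfl⟩
    · change ∑ i ∈ Finset.range 0, a i • e i = 0
      simp
    · intro n
      change ∑ i ∈ Finset.range (n + 1), a i • e i - ∑ i ∈ Finset.range n, a i • e i ∈ _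
      rw [Finset.sum_range_succ, add_sub_cancel_left]
      exact Submodule.smul_mem _ _ (Submodule.mem_span_singleton_self _)
  let L : E →L[ℝ] 𝒲 := (ContinuousMap.evalCLM ℝ (OnePoint.infty : OnePoint ℕ)).comp E.subtypeL
  have hL : ∀ u : E, L u = u.1 OnePoint.infty := fun u => rfl
  have hsurj : Function.Surjective L := by
    intro w
    obtain ⟨a, ha, -⟩ := he w
    obtain ⟨u, hu, -⟩ := hmk a w ha
    exact ⟨u, hu⟩
  have hinj : Function.Injective L := by
    rw [injective_iff_map_eq_zero]
    intro u hu
    have h1 : ∀ n : ℕ, ∃ c : ℝ, c • e n = u.1 ((n + 1 : ℕ) : OnePoint ℕ) - u.1 (n : OnePoint ℕ) :=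
      fun n => Submodule.mem_span_singleton.1 (u.2.2 n)
    choose a ha using h1
    have h2 : ∀ n : ℕ, u.1 (n : OnePoint ℕ) = ∑ i ∈ Finset.range n, a i • e i := by
      intro n
      induction n with
      | zero => simpa using u.2.1
      | succ k ih => rw [Finset.sum_range_succ, ← ih, ha]; abel
    have h3 : Tendsto (fun N => ∑ i ∈ Finset.range N, a i • e i) atTop (𝓝 (0 : 𝒲)) := by
      have h4 : Tendsto (fun n : ℕ => u.1 (n : OnePoint ℕ)) atTop (𝓝 (u.1 OnePoint.infty)) := by
        have h5 : Tendsto ((↑) : ℕ → OnePoint ℕ) atTop (𝓝 OnePoint.infty) := by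
          have := OnePoint.tendsto_coe_infty (X := ℕ)
          simpa [Nat.cofinite_eq_atTop] using this
        exact (u.1.continuous.tendsto _).comp h5
      rw [← hL, hu] at h4
      simpa [h2] using h4
    have h6 : a = 0 := (he 0).unique h3 (by simp)
    apply Subtype.ext
    ext p
    induction p using OnePoint.rec with
    | infty => exact hu
    | coe n => rw [h2]; simp [h6]
  let S0 := LinearEquiv.ofBijective L.toLinearMap ⟨hinj, hsurj⟩
  let S := (S0.toContinuousLinearEquivOfContinuous L.continuous).symm
  have hS : ∀ u : E, S (L u) = u := fun u => S0.symm_apply_apply u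
  have hne : ∀ n, e n ≠ 0 := by
    intro n hn
    have h := (he 0).unique (y₁ := 0) (y₂ := Pi.single n 1) (by simp) (by
      have : ∀ N, ∑ i ∈ Finset.range N, (Pi.single n 1 : ℕ → ℝ) i • e i = 0 := by
        intro N
        refine Finset.sum_eq_zero fun i _ => ?_
        by_cases hi : i = n
        · subst hi; simp [hn]
        · simp [hi]
      simp [this])
    have := congrFun h n
    simp at this
  have hg : ∀ n, ∃ g : 𝒲 →L[ℝ] ℝ, g (e n) = 1 := fun n =>
    SeparatingDual.exists_eq_one (R := ℝ) (hne n)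
  choose g hg using hg
  let D : ℕ → (𝒲 →L[ℝ] 𝒲) := fun n =>
    (((ContinuousMap.evalCLM ℝ ((n + 1 : ℕ) : OnePoint ℕ) -
      ContinuousMap.evalCLM ℝ (n : OnePoint ℕ) : C(OnePoint ℕ, 𝒲) →L[ℝ] 𝒲)).comp E.subtypeL).comp (S : 𝒲 →L[ℝ] E)
  refine ⟨fun n => (g n).comp (D n), fun i j => ?_⟩
  have hsum : ∀ N, ∑ k ∈ Finset.range N, (Pi.single j 1 : ℕ → ℝ) k • e k =
      if j < N then e j else 0 := by
    intro N
    simp [Pi.single_apply]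
  obtain ⟨u, hu, hun⟩ := hmk (Pi.single j 1) (e j) (by
    simp only [hsum]
    refine tendsto_const_nhds.congr' ?_
    filter_upwards [eventually_gt_atTop j] with N hN
    simp [hN])
  have hD : D i (e j) = u.1 ((i + 1 : ℕ) : OnePoint ℕ) - u.1 (i : OnePoint ℕ) := by
    have : S (e j) = u := by rw [← hu, ← hL, hS]
    change (S (e j)).1 _ - (S (e j)).1 _ = _
    rw [this]
  change g i (D i (e j)) = _
  rw [hD, hun, hun, Finset.sum_range_succ, add_sub_cancel_left]
  by_cases h : i = j
  · subst h; simp [hg]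
  · simp [h]

section
variable {𝒲 : Type} [NormedAddCommGroup 𝒲] [NormedSpace ℝ 𝒲]

theorem treeRank_le {T T' : Set (List 𝒲)} (g : List 𝒲 → List 𝒲) (hg : ∀ t ∈ T, g t ∈ T')
    (hmono : ∀ s t, s <+: t → s ≠ t → g s <+: g t ∧ g s ≠ g t) : treeRank T ≤ treeRank T' := by
  classical
  by_cases h' : WellFounded (fun t s : T' => s.val <+: t.val ∧ s.val ≠ t.val)
  · let G : T → T' := fun t => ⟨g t.1, hg _ t.2⟩
    have hG : ∀ t s : T, (s.val <+: t.val ∧ s.val ≠ t.val) →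
        ((G s).val <+: (G t).val ∧ (G s).val ≠ (G t).val) :=
      fun t s h => hmono _ _ h.1 h.2
    have h : WellFounded (fun t s : T => s.val <+: t.val ∧ s.val ≠ t.val) :=
      Subrelation.wf (r := InvImage (fun t s : T' => s.val <+: t.val ∧ s.val ≠ t.val) G)
        (fun {a b} hab => hG a b hab) (InvImage.wf G h')
    have key : ∀ s : T, (h.apply s).rank ≤ (h'.apply (G s)).rank := by
      intro s
      induction s using h.induction with
      | _ s ih =>
        rw [Acc.rank_eq]
        refine ciSup_le' fun b => ?_
        exact Order.succ_le_of_lt ((ih b.1 b.2).trans_lt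
          (Acc.rank_lt_of_rel (h'.apply (G s)) (hG _ _ b.2)))
    rw [treeRank, treeRank, dif_pos h, dif_pos h', WithTop.coe_le_coe]
    refine ciSup_le' fun s => ?_
    exact (Order.succ_le_succ (key s)).trans
      (Ordinal.le_iSup (fun s : T' => Order.succ (h'.apply s).rank) (G s))
  · rw [treeRank.eq_def T', dif_neg h']
    exact le_top

theorem embIndex_le {z z' : ℕ → 𝒲} {Y Y' : Set 𝒲}
    (H : ∀ K : ℝ, 1 ≤ K → ∃ K' : ℝ, 1 ≤ K' ∧
      treeRank (embTree z Y K) ≤ treeRank (embTree z' Y' K')) :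
    embIndex z Y ≤ embIndex z' Y' := by
  classical
  by_cases h' : ∃ K : ℝ, 1 ≤ K ∧ treeRank (embTree z' Y' K) = ⊤
  · rw [embIndex.eq_def z', if_pos h']; exact le_top
  · have h : ¬ ∃ K : ℝ, 1 ≤ K ∧ treeRank (embTree z Y K) = ⊤ := by
      rintro ⟨K, hK, hT⟩
      obtain ⟨K', hK', hle⟩ := H K hK
      exact h' ⟨K', hK', top_le_iff.1 (hT ▸ hle)⟩
    rw [embIndex, embIndex, if_neg h, if_neg h', WithTop.coe_le_coe]
    refine csSup_le' ?_
    rintro o ⟨K, hK, ho⟩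
    obtain ⟨K', hK', hle⟩ := H K hK
    have hne : treeRank (embTree z' Y' K') ≠ ⊤ := fun hh => h' ⟨K', hK', hh⟩
    obtain ⟨o', ho'⟩ := WithTop.ne_top_iff_exists.1 hne
    have hoo : o ≤ o' := by rw [← WithTop.coe_le_coe, ho, ho']; exact hle
    refine hoo.trans (le_csSup ?_ ⟨K', hK', ho'⟩)
    have hsub : {o : Ordinal | ∃ K : ℝ, 1 ≤ K ∧
        (o : WithTop Ordinal) = treeRank (embTree z' Y' K)} ⊆
        Set.range (fun K : ℝ => (treeRank (embTree z' Y' K)).untopD 0) := by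
      rintro o ⟨K, -, h⟩
      exact ⟨K, by simp [← h]⟩
    exact (Ordinal.bddAbove_of_small (s := Set.range _)).mono hsub

theorem embIndex_mono {z : ℕ → 𝒲} {Y Y' : Set 𝒲} (h : Y ⊆ Y') :
    embIndex z Y ≤ embIndex z Y' :=
  embIndex_le fun K hK => ⟨K, hK, treeRank_le id
    (fun _ ht => ⟨fun v hv => h (ht.1 v hv), ht.2⟩) (fun _ _ h1 h2 => ⟨h1, h2⟩)⟩

theorem step_bound {ψ : 𝒲 →L[ℝ] ℝ} {p q u v : 𝒲} {K : ℝ} (hK : 0 ≤ K)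
    (hp : ψ p = 1) (hu : ψ u = 0) (h : ‖v‖ ≤ K * ‖u‖) (a : ℝ) :
    ‖a • q + v‖ ≤ (‖ψ‖ * ‖q‖ + K * (1 + ‖ψ‖ * ‖p‖)) * ‖a • p + u‖ := by
  have ha : |a| ≤ ‖ψ‖ * ‖a • p + u‖ := by
    have := ψ.le_opNorm (a • p + u)
    simpa [hp, hu] using this
  have hu' : ‖u‖ ≤ (1 + ‖ψ‖ * ‖p‖) * ‖a • p + u‖ := by
    have h1 : u = (a • p + u) - a • p := by abel
    calc ‖u‖ = ‖(a • p + u) - a • p‖ := by rw [← h1]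
      _ ≤ ‖a • p + u‖ + ‖a • p‖ := norm_sub_le _ _
      _ = ‖a • p + u‖ + |a| * ‖p‖ := by rw [norm_smul, Real.norm_eq_abs]
      _ ≤ ‖a • p + u‖ + (‖ψ‖ * ‖a • p + u‖) * ‖p‖ := by gcongr
      _ = _ := by ring
  calc ‖a • q + v‖ ≤ ‖a • q‖ + ‖v‖ := norm_add_le _ _
    _ = |a| * ‖q‖ + ‖v‖ := by rw [norm_smul, Real.norm_eq_abs]
    _ ≤ (‖ψ‖ * ‖a • p + u‖) * ‖q‖ + K * ((1 + ‖ψ‖ * ‖p‖) * ‖a • p + u‖) := by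
        gcongr
        exact h.trans (by gcongr)
    _ = _ := by ring

theorem embIndex_step {z : ℕ → 𝒲} {Y Y' : Submodule ℝ 𝒲} (hY : Y' ≤ Y) {f : 𝒲} (hf : f ∈ Y)
    {ψ φ : 𝒲 →L[ℝ] ℝ} (hψ0 : ψ (z 0) = 1) (hψ : ∀ n, ψ (z (n + 1)) = 0)
    (hφf : φ f = 1) (hφ : ∀ v ∈ Y', φ v = 0) :
    embIndex (fun n => z (n + 1)) (Y' : Set 𝒲) ≤ embIndex z (Y : Set 𝒲) := by
  refine embIndex_le fun K hK => ?_
  have hK0 : 0 ≤ K := by linarith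
  set A := ‖ψ‖ * ‖f‖ + K * (1 + ‖ψ‖ * ‖z 0‖) with hA
  set B := ‖φ‖ * ‖z 0‖ + K * (1 + ‖φ‖ * ‖f‖) with hB
  have hA1 : 0 ≤ A := by positivity
  have hB1 : 0 ≤ B := by positivity
  refine ⟨A + B + 1, by linarith, treeRank_le (fun t => f :: t) ?_ ?_⟩
  · rintro t ⟨ht, heq⟩
    refine ⟨?_, ?_⟩
    · intro v hv
      rcases List.mem_cons.1 hv with rfl | hv
      · exact hf
      · exact hY (ht v hv)
    · intro a
      rw [List.length_cons, Finset.sum_range_succ', Finset.sum_range_succ']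
      simp only [List.getD_cons_succ, List.getD_cons_zero]
      obtain ⟨h1, h2⟩ := heq (fun i => a (i + 1))
      set v := ∑ i ∈ Finset.range t.length, a (i + 1) • t.getD i 0 with hv
      set u := ∑ i ∈ Finset.range t.length, a (i + 1) • z (i + 1) with hu
      have hψu : ψ u = 0 := by simp [hu, hψ]
      have hφv : φ v = 0 := by
        rw [hv, map_sum]
        refine Finset.sum_eq_zero fun i hi => ?_
        rw [map_smul, hφ, smul_zero]
        rw [List.getD_eq_getElem _ _ (Finset.mem_range.1 hi)]
        exact ht _ (List.getElem_mem _)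
      have h1' : ‖v‖ ≤ K * ‖u‖ := by
        rw [one_div, inv_mul_le_iff₀ (by linarith)] at h1
        exact h1
      have b1 := step_bound (q := f) hK0 hψ0 hψu h1' (a 0)
      have b2 := step_bound (q := z 0) hK0 hφf hφv h2 (a 0)
      rw [← hA] at b1
      rw [← hB] at b2
      rw [add_comm v, add_comm u]
      constructor
      · rw [one_div, inv_mul_le_iff₀ (by linarith)]
        refine b1.trans ?_
        gcongr; linarith
      · refine b2.trans ?_
        gcongr; linarith
  · intro s t h1 h2
    exact ⟨(List.prefix_cons_inj f).2 h1, fun h => h2 (List.cons_inj_right f |>.1 h)⟩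

theorem not_finDim_inf_ker {V : Type*} [AddCommGroup V] [Module ℝ V] [FiniteDimensional ℝ V]
    {Y : Submodule ℝ 𝒲} (hY : ¬ FiniteDimensional ℝ Y) (L : 𝒲 →ₗ[ℝ] V) :
    ¬ FiniteDimensional ℝ (Y ⊓ LinearMap.ker L : Submodule ℝ 𝒲) := by
  intro h
  apply hY
  have h1 := Module.Finite.iff_fg.1 h
  exact Module.Finite.iff_fg.2 (Submodule.fg_of_fg_map_of_fg_inf_ker L
    (IsNoetherian.noetherian _) h1)

/-- Concrete form of a block sequence with respect to a biorthogonal system. -/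
theorem block_data {b z : ℕ → 𝒲} (hz : IsBlockSeq b z) :
    ∃ (D : ℕ → Finset ℕ) (a : ℕ → ℕ → ℝ), (∀ n, z n = ∑ i ∈ D n, a n i • b i) ∧
      (∀ n, (D n).Nonempty) ∧ ∀ m n, m < n → ∀ i ∈ D m, ∀ j ∈ D n, i < j := by
  obtain ⟨h0, D, hD, hlt⟩ := hz
  choose a ha using hD
  have hne : ∀ n, (D n).Nonempty := by
    intro n
    rw [Finset.nonempty_iff_ne_empty]
    intro h
    apply h0 n
    rw [ha n, h, Finset.sum_empty]
  refine ⟨D, a, ha, hne, fun m n hmn => ?_⟩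
  induction n, hmn using Nat.le_induction with
  | base => exact hlt m
  | succ n _ ih =>
    intro i hi j hj
    obtain ⟨k, hk⟩ := hne n
    exact (ih i hi k hk).trans (hlt n k hk j hj)

theorem block_ge {D : ℕ → Finset ℕ} (hne : ∀ n, (D n).Nonempty)
    (hlt : ∀ m n, m < n → ∀ i ∈ D m, ∀ j ∈ D n, i < j) : ∀ n, ∀ i ∈ D n, n ≤ i := by
  intro n
  induction n with
  | zero => intro i _; exact Nat.zero_le _
  | succ n ih =>
    intro i hi
    obtain ⟨k, hk⟩ := hne n
    have := hlt n (n + 1) (Nat.lt_succ_self n) k hk i hi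
    have := ih k hk
    omega

theorem coord_sum {b : ℕ → 𝒲} {φ : ℕ → (𝒲 →L[ℝ] ℝ)}
    (hφ : ∀ i j, φ i (b j) = if i = j then 1 else 0) (s : Finset ℕ) (c : ℕ → ℝ) (i : ℕ) :
    φ i (∑ j ∈ s, c j • b j) = if i ∈ s then c i else 0 := by
  simp [hφ]

/-- biorthogonal functionals for block sequences -/
theorem block_biorth {b z : ℕ → 𝒲} {φ : ℕ → (𝒲 →L[ℝ] ℝ)}
    (hφ : ∀ i j, φ i (b j) = if i = j then 1 else 0)
    (h0 : ∀ n, z n ≠ 0) {D : ℕ → Finset ℕ} {a : ℕ → ℕ → ℝ}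
    (ha : ∀ n, z n = ∑ i ∈ D n, a n i • b i)
    (hlt : ∀ m n, m < n → ∀ i ∈ D m, ∀ j ∈ D n, i < j) :
    ∃ (k : ℕ → ℕ) (c : ℕ → ℝ), (∀ n, k n ∈ D n) ∧
      ∀ i j, (c i • φ (k i)) (z j) = if i = j then 1 else 0 := by
  have hk : ∀ n, ∃ k ∈ D n, a n k ≠ 0 := by
    intro n
    by_contra! h
    apply h0 n
    rw [ha n]
    exact Finset.sum_eq_zero fun i hi => by rw [h i hi, zero_smul]
  choose k hk hak using hk
  refine ⟨k, fun n => (a n (k n))⁻¹, hk, fun i j => ?_⟩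
  rw [smul_apply, ha j, coord_sum hφ]
  by_cases h : i = j
  · subst h
    simp [hk, hak]
  · have : k i ∉ D j := by
      intro hh
      rcases lt_or_gt_of_ne h with h | h
      · exact lt_irrefl _ (hlt i j h _ (hk i) _ hh)
      · exact lt_irrefl _ (hlt j i h _ hh _ (hk i))
    simp [this, h]

theorem finite_expansion {e y : ℕ → 𝒲} {φ ψ : ℕ → (𝒲 →L[ℝ] ℝ)}
    (hφ : ∀ i j, φ i (e j) = if i = j then 1 else 0)
    (hψ : ∀ i j, ψ i (y j) = if i = j then 1 else 0)
    {F : ℕ → Finset ℕ} {a : ℕ → ℕ → ℝ}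
    (ha : ∀ n, y n = ∑ i ∈ F n, a n i • e i)
    (hne : ∀ n, (F n).Nonempty)
    (hlt : ∀ m n, m < n → ∀ i ∈ F m, ∀ j ∈ F n, i < j)
    {v : 𝒲} (hv : v ∈ closedSpan (Set.range y)) {s : Finset ℕ} {c : ℕ → ℝ}
    (hvs : v = ∑ i ∈ s, c i • e i) :
    ∃ J : ℕ, v = ∑ j ∈ Finset.range J, ψ j v • y j := by
  classical
  let J := s.sup id + 1
  have hsJ : ∀ i ∈ s, i < J := fun i hi => Nat.lt_succ_of_le (Finset.le_sup (f := id) hi)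
  let S := (Finset.range J).biUnion F ∪ s
  have hP : ∀ (t : Finset ℕ) (c : ℕ → ℝ), t ⊆ S →
      ∑ i ∈ S, φ i (∑ j ∈ t, c j • e j) • e i = ∑ j ∈ t, c j • e j := by
    intro t c ht
    simp only [coord_sum hφ, ite_smul, zero_smul]
    rw [← Finset.sum_filter]
    congr 1
    ext i
    simp only [Finset.mem_filter]
    exact ⟨fun h => h.2, fun h => ⟨ht h, h⟩⟩
  let R : 𝒲 →L[ℝ] 𝒲 := ∑ i ∈ S, (φ i).smulRight (e i) -
    ∑ j ∈ Finset.range J, (ψ j).smulRight (y j)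
  have hR : ∀ w, R w = ∑ i ∈ S, φ i w • e i - ∑ j ∈ Finset.range J, ψ j w • y j := by
    intro w
    simp [R]
  have hRy : ∀ n, R (y n) = 0 := by
    intro n
    rw [hR, sub_eq_zero]
    have h2 : ∑ j ∈ Finset.range J, ψ j (y n) • y j = if n < J then y n else 0 := by
      simp [hψ]
    rw [h2]
    split_ifs with hn
    · conv_lhs => rw [ha n]
      rw [hP, ← ha]
      intro i hi
      exact Finset.mem_union_left _ (Finset.mem_biUnion.2 ⟨n, Finset.mem_range.2 hn, hi⟩)
    · rw [ha n]
      refine Finset.sum_eq_zero fun i hi => ?_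
      rw [coord_sum hφ, if_neg, zero_smul]
      intro hin
      rcases Finset.mem_union.1 hi with h | h
      · obtain ⟨m, hm, him⟩ := Finset.mem_biUnion.1 h
        have hm := Finset.mem_range.1 hm
        exact lt_irrefl _ (hlt m n (by omega) i him i hin)
      · have := hsJ i h
        have := block_ge hne hlt n i hin
        omega
  have hle : closedSpan (Set.range y) ≤ LinearMap.ker R.toLinearMap := by
    refine Submodule.topologicalClosure_minimal _ (Submodule.span_le.2 ?_) R.isClosed_ker
    rintro _ ⟨n, rfl⟩
    exact hRy n
  have hRv : R v = 0 := hle hv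
  rw [hR, sub_eq_zero] at hRv
  refine ⟨J, ?_⟩
  rw [← hRv]
  conv_rhs => rw [hvs]
  rw [hP _ _ Finset.subset_union_right, ← hvs]

end

/-- Let `𝒲 = [e n]` have a Schauder basis and let `𝒳 = [x n]`,
`𝒴 = [y n]` be block subspaces such that `x n ∈ 𝒴` for all but finitely many `n`.
If `[y n]` is `α`-minimal then `[x n]` is `α`-minimal.  (In particular, `α`-minimality is
preserved by passing to block subspaces.) -/
theorem alphaMinimal_of_almost_contained
    (𝒲 : Type) [NormedAddCommGroup 𝒲] [NormedSpace ℝ 𝒲] [CompleteSpace 𝒲]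
    (e : ℕ → 𝒲) (he : IsSchauderBasis e)
    (x y : ℕ → 𝒲) (hx : IsBlockSeq e x) (hy : IsBlockSeq e y)
    (hxy : ∀ᶠ n in Filter.atTop, x n ∈ closedSpan (Set.range y))
    (α : Ordinal) (hmin : IsAlphaMinimal y α) :
    IsAlphaMinimal x α := by
  classical
  obtain ⟨φ, hφ⟩ := biorth_of_schauder e he
  obtain ⟨Dx, ax, hax, hnex, hltx⟩ := block_data hx
  obtain ⟨Dy, ay, hay, hney, hlty⟩ := block_data hy
  obtain ⟨kx, cx, hkx, hχ⟩ := block_biorth hφ hx.1 hax hltx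
  obtain ⟨ky, cy, hky, hψ⟩ := block_biorth hφ hy.1 hay hlty
  obtain ⟨N, hN⟩ := eventually_atTop.1 hxy
  intro z hz
  obtain ⟨Dz, az, haz, hnez, hltz⟩ := block_data hz
  obtain ⟨kz, cz, hkz, hζ⟩ := block_biorth hχ hz.1 haz hltz
  -- the tail of `z` is a block sequence of `y`
  have htail : IsBlockSeq y (fun n => z (N + n)) := by
    refine ⟨fun n => hz.1 _, ?_⟩
    let E : ℕ → Finset ℕ := fun n => (Dz n).biUnion Dx
    have hE : ∀ n, ∃ c : ℕ → ℝ, z n = ∑ i ∈ E n, c i • e i := by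
      intro n
      have hmem : z n ∈ Submodule.span ℝ (e '' (E n : Set ℕ)) := by
        rw [haz n]
        refine Submodule.sum_mem _ fun i hi => Submodule.smul_mem _ _ ?_
        rw [hax i]
        refine Submodule.sum_mem _ fun j hj => Submodule.smul_mem _ _ ?_
        exact Submodule.subset_span ⟨j, Finset.mem_biUnion.2 ⟨i, hi, hj⟩, rfl⟩
      obtain ⟨c, hc⟩ := (Submodule.mem_span_image_finset_iff_exists_fun ℝ).1 hmem
      refine ⟨fun i => if h : i ∈ E n then c ⟨i, h⟩ else 0, ?_⟩
      rw [← hc, ← Finset.sum_coe_sort (E n)]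
      refine Finset.sum_congr rfl fun i _ => ?_
      simp
    choose c hc using hE
    have hEy : ∀ n, z (N + n) ∈ closedSpan (Set.range y) := by
      intro n
      rw [haz]
      refine Submodule.sum_mem _ fun i hi => Submodule.smul_mem _ _ (hN i ?_)
      have := block_ge hnez hltz _ i hi
      omega
    have hJ := fun n => finite_expansion (ψ := fun i => cy i • φ (ky i)) hφ hψ hay hney hlty
      (hEy n) (hc (N + n))
    choose J hJ using hJ
    refine ⟨fun n => (Finset.range (J n)).filter (fun j => ky j ∈ E (N + n)), fun n => ?_, ?_⟩
    · refine ⟨fun j => (cy j • φ (ky j)) (z (N + n)), ?_⟩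
      rw [Finset.sum_filter]
      refine (hJ n).trans ?_
      refine Finset.sum_congr rfl fun j _ => ?_
      split_ifs with h
      · rfl
      · rw [smul_apply, hc (N + n), coord_sum hφ, if_neg h, smul_zero,
          zero_smul]
    · intro n i hi j hj
      obtain ⟨p, hp, hip⟩ := Finset.mem_biUnion.1 (Finset.mem_filter.1 hi).2
      obtain ⟨q, hq, hjq⟩ := Finset.mem_biUnion.1 (Finset.mem_filter.1 hj).2
      have hpq : p < q := hltz (N + n) (N + (n + 1)) (by omega) p hp q hq
      have hk : ky i < ky j := hltx p q hpq _ hip _ hjq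
      by_contra hij
      rcases lt_or_eq_of_le (not_lt.1 hij) with h | h
      · exact lt_asymm hk (hlty j i h _ (hky j) _ (hky i))
      · subst h; exact lt_irrefl _ hk
  have main : ∀ m, m ≤ N → ∀ Y : Submodule ℝ 𝒲,
      (Y : Set 𝒲) ⊆ (closedSpan (Set.range x) : Set 𝒲) → ¬FiniteDimensional ℝ Y →
        (α : WithTop Ordinal) ≤ embIndex (fun n => z (m + n)) (Y : Set 𝒲) := by
    intro m hm
    induction hm using Nat.decreasingInduction with
    | self =>
      intro Y hY hdim
      let L : 𝒲 →ₗ[ℝ] (Fin N → ℝ) :=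
        LinearMap.pi fun i => (cx i • φ (kx i)).toLinearMap
      refine (hmin _ htail (Y ⊓ LinearMap.ker L) ?_ (not_finDim_inf_ker hdim L)).trans
        (embIndex_mono fun v hv => hv.1)
      rintro v ⟨hv1, hv2⟩
      let R : 𝒲 →L[ℝ] 𝒲 := ContinuousLinearMap.id ℝ 𝒲 -
        ∑ i ∈ Finset.range N, (cx i • φ (kx i)).smulRight (x i)
      have hR : ∀ w, R w = w - ∑ i ∈ Finset.range N, (cx i • φ (kx i)) w • x i := by
        intro w
        simp [R]
      have hle : closedSpan (Set.range x) ≤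
          (closedSpan (Set.range y)).comap R.toLinearMap := by
        refine Submodule.topologicalClosure_minimal _ (Submodule.span_le.2 ?_)
          ((Submodule.isClosed_topologicalClosure _).preimage R.continuous)
        rintro _ ⟨n, rfl⟩
        change R (x n) ∈ closedSpan (Set.range y)
        have h1 : ∑ i ∈ Finset.range N, (cx i • φ (kx i)) (x n) • x i =
            if n < N then x n else 0 := by
          simp only [hχ]
          simp
        rw [hR, h1]
        split_ifs with h
        · simp
        · simpa using hN n (not_lt.1 h)
      have h2 : R v ∈ closedSpan (Set.range y) := hle (hY hv1)
      have h3 : R v = v := by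
        rw [hR, Finset.sum_eq_zero, sub_zero]
        intro i hi
        have h4 : L v = 0 := hv2
        have h5 : (cx i • φ (kx i)) v = 0 := congrFun h4 ⟨i, Finset.mem_range.1 hi⟩
        rw [h5, zero_smul]
      rw [h3] at h2
      exact h2
    | of_succ m hm ih =>
      intro Y hY hdim
      have hYne : Y ≠ ⊥ := by
        rintro rfl
        exact hdim inferInstance
      obtain ⟨f, hfY, hf0⟩ := Submodule.exists_mem_ne_zero_of_ne_bot hYne
      obtain ⟨g, hg⟩ := SeparatingDual.exists_eq_one (R := ℝ) hf0
      have h1 := ih (Y ⊓ LinearMap.ker g.toLinearMap) (fun v hv => hY hv.1)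
        (not_finDim_inf_ker hdim _)
      have h2 := embIndex_step (z := fun n => z (m + n)) (Y := Y)
        (Y' := Y ⊓ LinearMap.ker g.toLinearMap) inf_le_left hfY
        (ψ := cz m • (cx (kz m) • φ (kx (kz m)))) (φ := g)
        (by simpa using hζ m m) (fun n => by simpa using hζ m (m + (n + 1))) hg
        (fun v hv => hv.2)
      have h3 : (fun n => z (m + 1 + n)) = fun n => z (m + (n + 1)) := by
        funext n; congr 1; omega
      rw [h3] at h1
      exact h1.trans h2
  intro Y hY hdim
  have := main 0 (Nat.zero_le _) Y hY hdim
  simpa using this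

end Rosendal
end

section
/- Every infinite-dimensional Banach space contains an infinite-dimensional closed subspace with a Schauder basis (e_n) such that [e_n] is either ω-tight or ω²-minimal. -/
open Filter Topology

namespace Rosendal

variable {𝒲 : Type} [NormedAddCommGroup 𝒲] [NormedSpace ℝ 𝒲]

/-- `(b n)` is a Schauder basis of its closed linear span. -/
def IsBasicSeq (b : ℕ → 𝒲) : Prop :=
  ∀ x ∈ closedSpan (Set.range b), ∃! a : ℕ → ℝ,
    Filter.Tendsto (fun N => ∑ i ∈ Finset.range N, a i • b i) Filter.atTop (𝓝 x)


/-- basis constant at most 2 -/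
def HasC (b : ℕ → 𝒲) : Prop :=
  ∀ N : ℕ, ∀ f ∈ Submodule.span ℝ (b '' {j | j < N}),
    ∀ g ∈ Submodule.span ℝ (b '' {j | N ≤ j}), ‖f‖ ≤ 2 * ‖f + g‖

/-- the first `n` vectors of `y` embed with constant `K` -/
def KEmb (K : ℝ) (n : ℕ) (y : ℕ → 𝒲) (Z : Submodule ℝ 𝒲) : Prop :=
  ∃ u : ℕ → 𝒲, (∀ i, u i ∈ Z) ∧ SeqEquiv K n u y

lemma seqEquiv_iff {K : ℝ} (hK : 0 < K) {k : ℕ} {x y : ℕ → 𝒲} :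
    SeqEquiv K k x y ↔ ∀ a : ℕ → ℝ,
      ‖∑ i ∈ Finset.range k, a i • x i‖ ≤ K * ‖∑ i ∈ Finset.range k, a i • y i‖ ∧
      ‖∑ i ∈ Finset.range k, a i • y i‖ ≤ K * ‖∑ i ∈ Finset.range k, a i • x i‖ := by
  unfold SeqEquiv
  refine forall_congr' fun a => and_congr_left fun _ => ?_
  rw [one_div, inv_mul_le_iff₀ hK]

lemma SeqEquiv.symm {K : ℝ} (hK : 0 < K) {k : ℕ} {x y : ℕ → 𝒲} (h : SeqEquiv K k x y) :
    SeqEquiv K k y x := by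
  rw [seqEquiv_iff hK] at h ⊢
  exact fun a => (h a).symm

lemma SeqEquiv.trans {K L : ℝ} (hK : 0 < K) (hL : 0 < L) {k : ℕ} {x y z : ℕ → 𝒲}
    (h : SeqEquiv K k x y) (h' : SeqEquiv L k y z) : SeqEquiv (K * L) k x z := by
  rw [seqEquiv_iff (by positivity)] at *
  intro a
  obtain ⟨h1, h2⟩ := h a
  obtain ⟨h3, h4⟩ := h' a
  constructor
  · calc _ ≤ _ := h1
      _ ≤ K * (L * ‖∑ i ∈ Finset.range k, a i • z i‖) := by gcongr
      _ = _ := by ring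
  · calc _ ≤ _ := h4
      _ ≤ L * (K * ‖∑ i ∈ Finset.range k, a i • x i‖) := by gcongr
      _ = _ := by ring

lemma SeqEquiv.mono {K L : ℝ} (hK : 0 < K) (hL : K ≤ L) {k : ℕ} {x y : ℕ → 𝒲}
    (h : SeqEquiv K k x y) : SeqEquiv L k x y := by
  have hL' : 0 < L := hK.trans_le hL
  rw [seqEquiv_iff (by positivity)] at *
  intro a
  exact ⟨(h a).1.trans (by gcongr), (h a).2.trans (by gcongr)⟩

lemma SeqEquiv.restrict {K : ℝ} {m k : ℕ} (hm : m ≤ k) {x y : ℕ → 𝒲}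
    (h : SeqEquiv K k x y) : SeqEquiv K m x y := by
  intro a
  have key : ∀ w : ℕ → 𝒲, ∑ i ∈ Finset.range k, (if i < m then a i else 0) • w i
      = ∑ i ∈ Finset.range m, a i • w i := by
    intro w
    rw [← Finset.sum_subset (Finset.range_subset_range.2 hm)]
    · refine Finset.sum_congr rfl fun i hi => ?_
      rw [if_pos (Finset.mem_range.1 hi)]
    · intro i _ hi
      rw [if_neg (by simpa using hi), zero_smul]
  have := h (fun i => if i < m then a i else 0)
  simpa only [key] using this

lemma SeqEquiv.congr {K : ℝ} {k : ℕ} {x x' y : ℕ → 𝒲} (hx : ∀ i < k, x i = x' i)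
    (h : SeqEquiv K k x y) : SeqEquiv K k x' y := by
  intro a
  have : ∑ i ∈ Finset.range k, a i • x' i = ∑ i ∈ Finset.range k, a i • x i :=
    Finset.sum_congr rfl fun i hi => by rw [hx i (Finset.mem_range.1 hi)]
  rw [this]
  exact h a

lemma mazur (F : Submodule ℝ 𝒲) [FiniteDimensional ℝ F] {θ : ℝ} (hθ : θ < 1) :
    ∃ (ι : Type) (_ : Fintype ι) (g : 𝒲 →L[ℝ] (ι → ℝ)),
      ∀ f ∈ F, ∀ z, g z = 0 → θ * ‖f‖ ≤ ‖f + z‖ := by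
  classical
  have hc : IsCompact (Metric.sphere (0 : F) 1) := isCompact_sphere _ _
  obtain ⟨t, _, htf, htc⟩ := hc.finite_cover_balls (e := 1 - θ) (by linarith)
  have : Fintype t := htf.fintype
  choose G hG1 hG2 using fun s : F => exists_dual_vector'' ℝ (s : 𝒲)
  refine ⟨t, inferInstance, ContinuousLinearMap.pi fun s => G s.1, ?_⟩
  intro f hf z hz
  rcases eq_or_ne f 0 with rfl | hf0
  · simp
  have hfn : 0 < ‖f‖ := norm_pos_iff.2 hf0
  let v : F := ‖f‖⁻¹ • ⟨f, hf⟩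
  have hv : v ∈ Metric.sphere (0 : F) 1 := by
    simp [v, norm_smul, hfn.ne']
  obtain ⟨s, hs, hvs⟩ := Set.mem_iUnion₂.1 (htc hv)
  have hz' : G s z = 0 := congrFun hz ⟨s, hs⟩
  have hs1 : ‖(s : 𝒲)‖ = 1 := by
    have := ‹t ⊆ _› hs
    simpa using this
  have h1 : 1 - G s (v : 𝒲) ≤ 1 - θ := by
    have h2 : 1 - G s (v : 𝒲) = G s ((s : 𝒲) - v) := by
      rw [map_sub, hG2, hs1]; rfl
    rw [h2]
    calc G s ((s : 𝒲) - v) ≤ ‖G s ((s : 𝒲) - v)‖ := le_abs_self _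
      _ ≤ ‖G s‖ * ‖(s : 𝒲) - v‖ := (G s).le_opNorm _
      _ ≤ 1 * ‖(s : 𝒲) - v‖ := by gcongr; exact hG1 s
      _ ≤ 1 - θ := by
        rw [one_mul, norm_sub_rev]
        have := (Metric.mem_ball.1 hvs).le
        rwa [dist_eq_norm] at this
  have h3 : G s (v : 𝒲) = ‖f‖⁻¹ * G s f := by simp [v]
  have h4 : θ * ‖f‖ ≤ G s f := by
    have h5 : θ ≤ ‖f‖⁻¹ * G s f := by rw [← h3]; linarith
    calc θ * ‖f‖ ≤ (‖f‖⁻¹ * G s f) * ‖f‖ := by gcongr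
      _ = G s f := by field_simp
  calc θ * ‖f‖ ≤ G s f := h4
    _ = G s (f + z) := by rw [map_add, hz', add_zero]
    _ ≤ ‖G s (f + z)‖ := le_abs_self _
    _ ≤ ‖G s‖ * ‖f + z‖ := (G s).le_opNorm _
    _ ≤ 1 * ‖f + z‖ := by gcongr; exact hG1 s
    _ = _ := one_mul _

lemma inf_ker {Y : Submodule ℝ 𝒲} (hY : ¬ FiniteDimensional ℝ Y) {ι : Type} [Fintype ι]
    (g : 𝒲 →L[ℝ] (ι → ℝ)) :
    ¬ FiniteDimensional ℝ (Y ⊓ LinearMap.ker (g : 𝒲 →ₗ[ℝ] (ι → ℝ)) : Submodule ℝ 𝒲) := by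
  intro h
  apply hY
  have h1 : (Y ⊓ LinearMap.ker (g : 𝒲 →ₗ[ℝ] (ι → ℝ))).FG := Module.Finite.iff_fg.1 h
  exact Module.Finite.iff_fg.2 (Submodule.fg_of_fg_map_of_fg_inf_ker (g : 𝒲 →ₗ[ℝ] (ι → ℝ))
    (Module.Finite.iff_fg.1 inferInstance) h1)

lemma inf_tail {Z F T : Submodule ℝ 𝒲} (hZ : ¬ FiniteDimensional ℝ Z) (hF : F.FG)
    (h : Z ≤ F ⊔ T) : ¬ FiniteDimensional ℝ (Z ⊓ T : Submodule ℝ 𝒲) := by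
  intro hfd
  apply hZ
  refine Module.Finite.iff_fg.2 (Submodule.fg_of_fg_map_of_fg_inf_ker T.mkQ ?_ ?_)
  · have hF' : FiniteDimensional ℝ (F.map T.mkQ) := Module.Finite.iff_fg.2 (hF.map _)
    have hle : Z.map T.mkQ ≤ F.map T.mkQ := by
      refine (Submodule.map_mono h).trans ?_
      rw [Submodule.map_sup]
      simp
    exact Module.Finite.iff_fg.1 (Submodule.finiteDimensional_of_le hle)
  · rw [Submodule.ker_mkQ]
    exact Module.Finite.iff_fg.1 hfd

lemma step_exists {Y : Submodule ℝ 𝒲} (hY : ¬ FiniteDimensional ℝ Y) (F : Submodule ℝ 𝒲)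
    (hF : F.FG) (n : ℕ) : ∃ x ∈ Y, ‖x‖ = 1 ∧ ∀ f ∈ F, ∀ t : ℝ,
      (2 - 1 / ((n : ℝ) + 1)) * ‖f‖ ≤ (2 - 1 / ((n : ℝ) + 2)) * ‖f + t • x‖ := by
  have : FiniteDimensional ℝ F := Module.Finite.iff_fg.2 hF
  have hn : (0 : ℝ) ≤ n := n.cast_nonneg
  have hlt : 1 / ((n : ℝ) + 2) < 1 / ((n : ℝ) + 1) := by
    apply one_div_lt_one_div_of_lt <;> linarith
  have hle : 1 / ((n : ℝ) + 1) ≤ 1 := by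
    rw [div_le_one (by linarith)]; linarith
  have hpos : 0 < 2 - 1 / ((n : ℝ) + 2) := by linarith
  obtain ⟨ι, _, g, hg⟩ := mazur F (θ := (2 - 1 / ((n : ℝ) + 1)) / (2 - 1 / ((n : ℝ) + 2)))
    (by rw [div_lt_one hpos]; linarith)
  have h1 := inf_ker hY g
  have h2 : (Y ⊓ LinearMap.ker (g : 𝒲 →ₗ[ℝ] (ι → ℝ)) : Submodule ℝ 𝒲) ≠ ⊥ := by
    intro h; rw [h] at h1; exact h1 inferInstance
  obtain ⟨w, hw, hw0⟩ := Submodule.exists_mem_ne_zero_of_ne_bot h2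
  have hgw : g w = 0 := hw.2
  refine ⟨‖w‖⁻¹ • w, Y.smul_mem _ hw.1, by
    rw [norm_smul, norm_inv, norm_norm, inv_mul_cancel₀ (norm_ne_zero_iff.2 hw0)], fun f hf t => ?_⟩
  have := hg f hf (t • ‖w‖⁻¹ • w) (by simp [hgw])
  rw [div_mul_eq_mul_div, div_le_iff₀ hpos] at this
  linarith

lemma exists_basic (Y : ℕ → Submodule ℝ 𝒲) (hY : ∀ n, ¬ FiniteDimensional ℝ (Y n)) :
    ∃ x : ℕ → 𝒲, (∀ n, ‖x n‖ = 1) ∧ (∀ n, x n ∈ Y n) ∧ HasC x := by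
  choose! s hs1 hs2 hs3 using fun (n : ℕ) (F : {F : Submodule ℝ 𝒲 // F.FG}) =>
    step_exists (hY n) F.1 F.2 n
  let st : ℕ → {F : Submodule ℝ 𝒲 // F.FG} := fun n => Nat.rec ⟨⊥, Submodule.fg_bot⟩
    (fun n F => ⟨F.1 ⊔ Submodule.span ℝ {s n F}, F.2.sup (Submodule.fg_span_singleton _)⟩) n
  let x : ℕ → 𝒲 := fun n => s n (st n)
  have hst : ∀ n, (st (n + 1)).1 = (st n).1 ⊔ Submodule.span ℝ {x n} := fun n => rfl
  have hspan : ∀ n, (st n).1 = Submodule.span ℝ (x '' {j | j < n}) := by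
    intro n
    induction n with
    | zero => simp [st]
    | succ n ih =>
      rw [hst, ih, ← Submodule.span_union]
      congr 1
      ext v
      constructor
      · rintro (⟨j, hj, rfl⟩ | rfl)
        · exact ⟨j, Nat.lt_succ_of_lt hj, rfl⟩
        · exact ⟨n, Nat.lt_succ_self n, rfl⟩
      · rintro ⟨j, hj, rfl⟩
        rcases Nat.lt_succ_iff_lt_or_eq.1 hj with h | rfl
        · exact Or.inl ⟨j, h, rfl⟩
        · exact Or.inr rfl
  let c : ℕ → ℝ := fun n => 2 - 1 / ((n : ℝ) + 1)
  have hstep : ∀ n, ∀ f ∈ (st n).1, ∀ t : ℝ, c n * ‖f‖ ≤ c (n + 1) * ‖f + t • x n‖ := by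
    intro n f hf t
    have := hs3 n (st n) f hf t
    have h2 : c (n + 1) = 2 - 1 / ((n : ℝ) + 2) := by simp only [c]; push_cast; ring_nf
    rw [h2]; exact this
  refine ⟨x, fun n => hs2 _ _, fun n => hs1 _ _, ?_⟩
  have hmono : ∀ m n, m ≤ n → (st m).1 ≤ (st n).1 := by
    intro m n h
    induction n, h using Nat.le_induction with
    | base => exact le_rfl
    | succ n _ ih => exact ih.trans (by rw [hst]; exact le_sup_left)
  intro N f hf g hg
  rw [← hspan] at hf
  -- key claim
  have key : ∀ k, ∀ h ∈ Submodule.span ℝ (x '' {j | N ≤ j ∧ j < N + k}),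
      h ∈ (st (N + k)).1 ∧ c N * ‖f‖ ≤ c (N + k) * ‖f + h‖ := by
    intro k
    induction k with
    | zero =>
      intro h hh
      have : h = 0 := by
        have : {j | N ≤ j ∧ j < N + 0} = (∅ : Set ℕ) := by ext j; simp
        rw [this] at hh; simpa using hh
      subst this; simp
    | succ k ih =>
      intro h hh
      have h1 : x '' {j | N ≤ j ∧ j < N + (k + 1)} =
          insert (x (N + k)) (x '' {j | N ≤ j ∧ j < N + k}) := by
        rw [← Set.image_insert_eq]
        congr 1
        ext j; change _ ↔ j = N + k ∨ (N ≤ j ∧ j < N + k); change (N ≤ j ∧ j < N + (k + 1)) ↔ _; omega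
      rw [h1, Submodule.mem_span_insert] at hh
      obtain ⟨t, h', hh', rfl⟩ := hh
      obtain ⟨i1, i2⟩ := ih h' hh'
      constructor
      · rw [← add_assoc, hst]
        exact add_mem (Submodule.smul_mem _ _ (Submodule.mem_sup_right
          (Submodule.mem_span_singleton_self _))) (Submodule.mem_sup_left i1)
      · have := hstep (N + k) (f + h') (add_mem (hmono N (N + k) (by omega) hf) i1) t
        have e : f + (t • x (N + k) + h') = f + h' + t • x (N + k) := by abel
        rw [e]; exact i2.trans this
  have hk : ∃ k, g ∈ Submodule.span ℝ (x '' {j | N ≤ j ∧ j < N + k}) := by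
    induction hg using Submodule.span_induction with
    | mem v hv =>
      obtain ⟨j, hj, rfl⟩ := hv
      exact ⟨j + 1, Submodule.subset_span ⟨j, ⟨hj, by omega⟩, rfl⟩⟩
    | zero => exact ⟨0, zero_mem _⟩
    | add u v _ _ hu hv =>
      obtain ⟨k, hk⟩ := hu
      obtain ⟨l, hl⟩ := hv
      refine ⟨k + l, add_mem ?_ ?_⟩
      · exact Submodule.span_mono (Set.image_mono fun j (hj : N ≤ j ∧ j < _) => (show N ≤ j ∧ j < N + (k + l) by omega)) hk
      · exact Submodule.span_mono (Set.image_mono fun j (hj : N ≤ j ∧ j < _) => (show N ≤ j ∧ j < N + (k + l) by omega)) hl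
    | smul a u _ hu =>
      obtain ⟨k, hk⟩ := hu
      exact ⟨k, Submodule.smul_mem _ _ hk⟩
  obtain ⟨k, hk⟩ := hk
  have h1 := (key k g hk).2
  have hc1 : 1 ≤ c N := by
    have : 1 / ((N : ℝ) + 1) ≤ 1 := by
      rw [div_le_one (by positivity)]; linarith [N.cast_nonneg (α := ℝ)]
    simp only [c]; linarith
  have hc2 : c (N + k) ≤ 2 := by
    have : 0 ≤ 1 / (((N + k : ℕ) : ℝ) + 1) := by positivity
    simp only [c]; linarith
  calc ‖f‖ ≤ c N * ‖f‖ := le_mul_of_one_le_left (norm_nonneg _) hc1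
    _ ≤ _ := h1
    _ ≤ _ := by gcongr


lemma HasC.block {x y : ℕ → 𝒲} (hx : HasC x) (hy : IsBlockSeq x y) : HasC y := by
  obtain ⟨hy0, D, hD, hlt⟩ := hy
  have hne : ∀ n, (D n).Nonempty := by
    intro n
    rw [Finset.nonempty_iff_ne_empty]
    intro h
    obtain ⟨a, ha⟩ := hD n
    rw [h] at ha
    exact hy0 n (by simpa using ha)
  have hlt' : ∀ m n, m < n → ∀ i ∈ D m, ∀ j ∈ D n, i < j := by
    intro m n hmn
    induction n, hmn using Nat.le_induction with
    | base => exact hlt m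
    | succ n _ ih =>
      intro i hi j hj
      obtain ⟨p, hp⟩ := hne n
      exact (ih i hi p hp).trans (hlt n p hp j hj)
  have hmem : ∀ (S : Set ℕ) n, (∀ i ∈ D n, i ∈ S) → y n ∈ Submodule.span ℝ (x '' S) := by
    intro S n hS
    obtain ⟨a, ha⟩ := hD n
    rw [ha]
    exact Submodule.sum_mem _ fun i hi =>
      Submodule.smul_mem _ _ (Submodule.subset_span ⟨i, hS i hi, rfl⟩)
  intro N f hf g hg
  let M := (D N).min' (hne N)
  refine hx M f ?_ g ?_
  · refine (Submodule.span_le.2 ?_) hf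
    rintro _ ⟨j, hj, rfl⟩
    exact hmem {j | j < M} j fun i hi => hlt' j N hj i hi M ((D N).min'_mem _)
  · refine (Submodule.span_le.2 ?_) hg
    rintro _ ⟨j, hj, rfl⟩
    refine hmem {j | M ≤ j} j fun i hi => ?_
    rcases (show N ≤ j from hj).eq_or_lt with rfl | h
    · exact (D N).min'_le _ hi
    · exact (hlt' N j h M ((D N).min'_mem _) i hi).le

lemma block_mem_span {x y : ℕ → 𝒲} (hy : IsBlockSeq x y) (n : ℕ) :
    y n ∈ Submodule.span ℝ (Set.range x) := by
  obtain ⟨_, D, hD, _⟩ := hy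
  obtain ⟨a, ha⟩ := hD n
  rw [ha]
  exact Submodule.sum_mem _ fun i _ => Submodule.smul_mem _ _ (Submodule.subset_span ⟨i, rfl⟩)

lemma HasC.partial_le {b : ℕ → 𝒲} (hb : HasC b) (a : ℕ → ℝ) {m n : ℕ} (h : m ≤ n) :
    ‖∑ i ∈ Finset.range m, a i • b i‖ ≤ 2 * ‖∑ i ∈ Finset.range n, a i • b i‖ := by
  rw [← Finset.sum_range_add_sum_Ico _ h]
  refine hb m _ ?_ _ ?_
  · exact Submodule.sum_mem _ fun i hi => Submodule.smul_mem _ _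
      (Submodule.subset_span ⟨i, Finset.mem_range.1 hi, rfl⟩)
  · exact Submodule.sum_mem _ fun i hi => Submodule.smul_mem _ _
      (Submodule.subset_span ⟨i, (Finset.mem_Ico.1 hi).1, rfl⟩)

lemma HasC.coord_le {b : ℕ → 𝒲} (hb : HasC b) (a : ℕ → ℝ) {i n : ℕ} (h : i < n) :
    |a i| * ‖b i‖ ≤ 4 * ‖∑ i ∈ Finset.range n, a i • b i‖ := by
  have h1 := hb.partial_le a (show i + 1 ≤ n from h)
  have h2 := hb.partial_le a h.le
  have h3 : a i • b i = ∑ i ∈ Finset.range (i + 1), a i • b i - ∑ i ∈ Finset.range i, a i • b i := by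
    rw [Finset.sum_range_succ]; abel
  calc |a i| * ‖b i‖ = ‖a i • b i‖ := by rw [norm_smul, Real.norm_eq_abs]
    _ ≤ ‖∑ i ∈ Finset.range (i + 1), a i • b i‖ + ‖∑ i ∈ Finset.range i, a i • b i‖ :=
      h3 ▸ norm_sub_le _ _
    _ ≤ _ := by linarith

lemma finset_to_range (s : Finset ℕ) (g : ℕ → ℝ) (b : ℕ → 𝒲) : ∃ n, (∀ i ∈ s, i < n) ∧
    ∑ i ∈ s, g i • b i = ∑ i ∈ Finset.range n, (if i ∈ s then g i else 0) • b i := by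
  refine ⟨s.sup id + 1, fun i hi => Nat.lt_succ_of_le (Finset.le_sup (f := id) hi), ?_⟩
  have hsub : s ⊆ Finset.range (s.sup id + 1) := fun i hi =>
    Finset.mem_range.2 (Nat.lt_succ_of_le (Finset.le_sup (f := id) hi))
  rw [← Finset.sum_subset hsub]
  · exact Finset.sum_congr rfl fun i hi => by rw [if_pos hi]
  · intro i _ hi
    rw [if_neg hi, zero_smul]

lemma HasC.linInd {b : ℕ → 𝒲} (hb : HasC b) (h0 : ∀ n, b n ≠ 0) : LinearIndependent ℝ b := by
  rw [linearIndependent_iff']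
  intro s g hs i hi
  obtain ⟨n, hn, he⟩ := finset_to_range s g b
  have := hb.coord_le (fun i => if i ∈ s then g i else 0) (hn i hi)
  rw [← he, hs, norm_zero, mul_zero] at this
  simp only [if_pos hi] at this
  have h1 : 0 < ‖b i‖ := norm_pos_iff.2 (h0 i)
  have h2 : |g i| ≤ 0 := by
    by_contra h
    push Not at h
    nlinarith
  exact abs_nonpos_iff.1 h2

lemma HasC.inf_dim {b : ℕ → 𝒲} (hb : HasC b) (h0 : ∀ n, b n ≠ 0) :
    ¬ FiniteDimensional ℝ (closedSpan (Set.range b)) := by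
  intro h
  have hmem : ∀ n, b n ∈ closedSpan (Set.range b) := fun n =>
    Submodule.le_topologicalClosure _ (Submodule.subset_span ⟨n, rfl⟩)
  have hl : LinearIndependent ℝ (fun n => (⟨b n, hmem n⟩ : closedSpan (Set.range b))) := by
    apply LinearIndependent.of_comp (closedSpan (Set.range b)).subtype
    exact hb.linInd h0
  have := hl.finite
  exact not_finite ℕ

lemma HasC.biorth {b : ℕ → 𝒲} (hb : HasC b) (h0 : ∀ n, b n ≠ 0) :
    ∃ φ : ℕ → StrongDual ℝ 𝒲, (∀ i j, φ i (b j) = if j = i then 1 else 0) ∧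
      ∀ i, ‖φ i‖ ≤ 4 / ‖b i‖ := by
  have hl := hb.linInd h0
  have : ∀ i, ∃ φ : StrongDual ℝ 𝒲, (∀ j, φ (b j) = if j = i then 1 else 0) ∧
      ‖φ‖ ≤ 4 / ‖b i‖ := by
    intro i
    have hpos : 0 < ‖b i‖ := norm_pos_iff.2 (h0 i)
    let f : Submodule.span ℝ (Set.range b) →ₗ[ℝ] ℝ :=
      (Finsupp.lapply i : (ℕ →₀ ℝ) →ₗ[ℝ] ℝ) ∘ₗ (hl.repr : _ →ₗ[ℝ] (ℕ →₀ ℝ))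
    have hf : ∀ v, ‖f v‖ ≤ 4 / ‖b i‖ * ‖v‖ := by
      intro v
      have e := hl.linearCombination_repr v
      rw [Finsupp.linearCombination_apply, Finsupp.sum] at e
      obtain ⟨n, hn, he⟩ := finset_to_range (hl.repr v).support (hl.repr v) b
      by_cases hi : i ∈ (hl.repr v).support
      · have := hb.coord_le (fun j => if j ∈ (hl.repr v).support then hl.repr v j else 0) (hn i hi)
        rw [← he, e] at this
        simp only [if_pos hi] at this
        rw [div_mul_eq_mul_div, le_div_iff₀ hpos]
        exact this
      · have : f v = 0 := Finsupp.notMem_support_iff.1 hi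
        rw [this, norm_zero]; positivity
    obtain ⟨φ, h1, h2⟩ := exists_extension_norm_eq _ (f.mkContinuous _ hf)
    refine ⟨φ, fun j => ?_, ?_⟩
    · have h3 := h1 ⟨b j, Submodule.subset_span ⟨j, rfl⟩⟩
      have h4 : hl.repr ⟨b j, Submodule.subset_span ⟨j, rfl⟩⟩ = Finsupp.single j 1 :=
        hl.repr_eq_single j _ rfl
      rw [h3]
      change hl.repr ⟨b j, Submodule.subset_span ⟨j, rfl⟩⟩ i = _
      rw [h4, Finsupp.single_apply]
    · rw [h2]
      exact LinearMap.mkContinuous_norm_le _ (by positivity) _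
  choose φ h1 h2 using this
  exact ⟨φ, h1, h2⟩

lemma HasC.isBasic {b : ℕ → 𝒲} (hb : HasC b) (h0 : ∀ n, b n ≠ 0) : IsBasicSeq b := by
  obtain ⟨φ, hφ, -⟩ := hb.biorth h0
  let P : ℕ → 𝒲 →L[ℝ] 𝒲 := fun m => ∑ i ∈ Finset.range m, (φ i).smulRight (b i)
  have hP : ∀ m w, P m w = ∑ i ∈ Finset.range m, φ i w • b i := by
    intro m w; simp [P]
  have hPb : ∀ m j, P m (b j) = if j < m then b j else 0 := by
    intro m j
    rw [hP]
    simp [hφ]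
  -- representation of span elements
  have hspan : ∀ v ∈ Submodule.span ℝ (Set.range b), ∃ n, ∀ m, n ≤ m → P m v = v := by
    intro v hv
    induction hv using Submodule.span_induction with
    | mem v hv =>
      obtain ⟨j, rfl⟩ := hv
      exact ⟨j + 1, fun m hm => by rw [hPb, if_pos (by omega)]⟩
    | zero => exact ⟨0, fun m _ => map_zero _⟩
    | add u v _ _ hu hv =>
      obtain ⟨k, hk⟩ := hu
      obtain ⟨l, hl⟩ := hv
      exact ⟨k + l, fun m hm => by rw [map_add, hk m (by omega), hl m (by omega)]⟩
    | smul a u _ hu =>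
      obtain ⟨k, hk⟩ := hu
      exact ⟨k, fun m hm => by rw [map_smul, hk m hm]⟩
  have hbd : ∀ m, ∀ v ∈ closedSpan (Set.range b), ‖P m v‖ ≤ 2 * ‖v‖ := by
    intro m v hv
    have hcl : IsClosed {v : 𝒲 | ‖P m v‖ ≤ 2 * ‖v‖} :=
      isClosed_le (by fun_prop) (by fun_prop)
    have hsub : (Submodule.span ℝ (Set.range b) : Set 𝒲) ⊆ {v : 𝒲 | ‖P m v‖ ≤ 2 * ‖v‖} := by
      intro v hv
      obtain ⟨n, hn⟩ := hspan v hv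
      change ‖P m v‖ ≤ 2 * ‖v‖
      have h1 := hb.partial_le (fun i => φ i v) (le_max_left m n)
      rw [← hP, ← hP, hn _ (le_max_right m n)] at h1
      exact h1
    exact closure_minimal hsub hcl hv
  intro v hv
  have hconv : Tendsto (fun N => P N v) atTop (𝓝 v) := by
    rw [Metric.tendsto_atTop]
    intro ε hε
    obtain ⟨w, hw, hwv⟩ := Metric.mem_closure_iff.1 hv (ε / 4) (by linarith)
    obtain ⟨n, hn⟩ := hspan w hw
    refine ⟨n, fun m hm => ?_⟩
    have h1 := hbd m (v - w) (sub_mem hv (Submodule.le_topologicalClosure _ hw))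
    rw [map_sub, hn m hm] at h1
    rw [dist_eq_norm] at hwv ⊢
    calc ‖P m v - v‖ = ‖(P m v - w) - (v - w)‖ := by congr 1; abel
      _ ≤ ‖P m v - w‖ + ‖v - w‖ := norm_sub_le _ _
      _ < ε := by linarith
  refine ⟨fun i => φ i v, ?_, ?_⟩
  · simpa only [hP] using hconv
  · intro a ha
    funext j
    have h1 : Tendsto (fun N => φ j (∑ i ∈ Finset.range N, a i • b i)) atTop (𝓝 (φ j v)) :=
      ((φ j).continuous.tendsto v).comp ha
    have h2 : Tendsto (fun N => φ j (∑ i ∈ Finset.range N, a i • b i)) atTop (𝓝 (a j)) := by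
      refine tendsto_const_nhds.congr' ?_
      filter_upwards [eventually_gt_atTop j] with N hN
      simp [hφ, hN]
    exact tendsto_nhds_unique h2 h1

lemma HasC.lower {b : ℕ → 𝒲} (hb : HasC b) (h0 : ∀ n, b n ≠ 0) (n : ℕ) :
    ∃ κ : ℝ, 0 < κ ∧ ∀ a : ℕ → ℝ, ∀ i < n, |a i| ≤ κ * ‖∑ i ∈ Finset.range n, a i • b i‖ := by
  have hnn : ∀ i, 0 ≤ 4 / ‖b i‖ := fun i => by positivity
  refine ⟨1 + ∑ i ∈ Finset.range n, 4 / ‖b i‖, ?_, fun a i hi => ?_⟩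
  · have := Finset.sum_nonneg fun i (_ : i ∈ Finset.range n) => hnn i
    linarith
  · have hpos : 0 < ‖b i‖ := norm_pos_iff.2 (h0 i)
    have h1 := hb.coord_le a hi
    have h2 : |a i| ≤ 4 / ‖b i‖ * ‖∑ i ∈ Finset.range n, a i • b i‖ := by
      rw [div_mul_eq_mul_div, le_div_iff₀ hpos]; exact h1
    have h3 := Finset.single_le_sum (fun i _ => hnn i) (Finset.mem_range.2 hi)
    refine h2.trans ?_
    gcongr
    linarith

lemma perturb {n : ℕ} {u : ℕ → 𝒲} {κ : ℝ} (hκ : 0 < κ)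
    (h : ∀ a : ℕ → ℝ, ∀ i < n, |a i| ≤ κ * ‖∑ i ∈ Finset.range n, a i • u i‖) :
    ∃ δ > 0, ∀ v : ℕ → 𝒲, (∀ i < n, ‖u i - v i‖ ≤ δ) → SeqEquiv 2 n u v := by
  refine ⟨1 / (2 * (n + 1) * κ), by positivity, fun v hv => ?_⟩
  rw [seqEquiv_iff two_pos]
  intro a
  set A := ∑ i ∈ Finset.range n, a i • u i with hA
  set B := ∑ i ∈ Finset.range n, a i • v i with hB
  have h1 : ‖A - B‖ ≤ 1 / 2 * ‖A‖ := by
    rw [hA, hB, ← Finset.sum_sub_distrib]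
    calc ‖∑ i ∈ Finset.range n, (a i • u i - a i • v i)‖
        ≤ ∑ i ∈ Finset.range n, ‖a i • u i - a i • v i‖ := norm_sum_le _ _
      _ ≤ ∑ i ∈ Finset.range n, (κ * ‖A‖) * (1 / (2 * (n + 1) * κ)) := by
        refine Finset.sum_le_sum fun i hi => ?_
        rw [← smul_sub, norm_smul, Real.norm_eq_abs]
        have hi' := Finset.mem_range.1 hi
        exact mul_le_mul (h a i hi') (hv i hi') (norm_nonneg _) (by positivity)
      _ = (n / (n + 1)) * (1 / 2 * ‖A‖) := by
        rw [Finset.sum_const, Finset.card_range, nsmul_eq_mul]; field_simp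
      _ ≤ 1 * (1 / 2 * ‖A‖) := by
        gcongr
        rw [div_le_one (by positivity)]; linarith
      _ = 1 / 2 * ‖A‖ := one_mul _
  have h2 : ‖A‖ ≤ ‖A - B‖ + ‖B‖ := by
    calc ‖A‖ = ‖(A - B) + B‖ := by congr 1; abel
      _ ≤ _ := norm_add_le _ _
  have h3 : ‖B‖ ≤ ‖A‖ + ‖A - B‖ := by
    calc ‖B‖ = ‖A - (A - B)‖ := by congr 1; abel
      _ ≤ _ := norm_sub_le _ _
  have := norm_nonneg A
  constructor <;> linarith


lemma KEmb.mono {K L : ℝ} (hK : 0 < K) (hL : K ≤ L) {n : ℕ} {y : ℕ → 𝒲}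
    {Z Z' : Submodule ℝ 𝒲} (hZ : Z ≤ Z') (h : KEmb K n y Z) : KEmb L n y Z' := by
  obtain ⟨u, hu, he⟩ := h
  exact ⟨u, fun i => hZ (hu i), he.mono hK hL⟩

lemma KEmb.trans {K L : ℝ} (hK : 0 < K) (hL : 0 < L) {n : ℕ} {y v : ℕ → 𝒲}
    {Z : Submodule ℝ 𝒲} (h : KEmb K n y Z) (hv : SeqEquiv L n y v) : KEmb (K * L) n v Z := by
  obtain ⟨u, hu, he⟩ := h
  exact ⟨u, hu, he.trans hK hL hv⟩

lemma KEmb.of_closure {K : ℝ} (hK : 0 < K) {n : ℕ} {y : ℕ → 𝒲} (hy : HasC y)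
    (h0 : ∀ n, y n ≠ 0) {Z : Submodule ℝ 𝒲} (h : KEmb K n y Z.topologicalClosure) :
    KEmb (2 * K) n y Z := by
  obtain ⟨u, hu, he⟩ := h
  obtain ⟨κ, hκ, hκ'⟩ := hy.lower h0 n
  obtain ⟨δ, hδ, hp⟩ := perturb (u := u) (n := n) (κ := κ * K) (by positivity) (by
    intro a i hi
    have h1 := hκ' a i hi
    have h2 := ((seqEquiv_iff hK).1 he a).2
    calc _ ≤ _ := h1
      _ ≤ κ * (K * ‖∑ i ∈ Finset.range n, a i • u i‖) := by gcongr
      _ = _ := by ring)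
  have : ∀ i, ∃ v ∈ Z, ‖u i - v‖ ≤ δ := by
    intro i
    obtain ⟨v, hv, hd⟩ := Metric.mem_closure_iff.1 (hu i) δ hδ
    exact ⟨v, hv, by rw [← dist_eq_norm]; exact hd.le⟩
  choose v hv hd using this
  exact ⟨v, hv, ((hp v fun i _ => hd i).symm two_pos).trans two_pos hK he⟩

lemma tail_sup (x : ℕ → 𝒲) (n : ℕ) : closedSpan (Set.range x) ≤
    Submodule.span ℝ (x '' {j | j < n}) ⊔ closedSpan (x '' {j | n ≤ j}) := by
  have hfin : (x '' {j | j < n}).Finite := (Set.finite_lt_nat n).image x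
  have hfg : (Submodule.span ℝ (x '' {j | j < n})).FG := Submodule.fg_span hfin
  have : FiniteDimensional ℝ (Submodule.span ℝ (x '' {j | j < n})) := Module.Finite.iff_fg.2 hfg
  have hcl : IsClosed ((closedSpan (x '' {j | n ≤ j}) ⊔ Submodule.span ℝ (x '' {j | j < n}) :
      Submodule ℝ 𝒲) : Set 𝒲) :=
    Submodule.isClosed_sup_finiteDimensional _ _ (Submodule.isClosed_topologicalClosure _)
  rw [sup_comm]
  refine Submodule.topologicalClosure_minimal _ (Submodule.span_le.2 ?_) hcl
  rintro _ ⟨j, rfl⟩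
  rcases lt_or_ge j n with h | h
  · exact Submodule.mem_sup_right (Submodule.subset_span ⟨j, h, rfl⟩)
  · exact Submodule.mem_sup_left
      (Submodule.le_topologicalClosure _ (Submodule.subset_span ⟨j, h, rfl⟩))

/-- closed and infinite dimensional -/
def Good (Z : Submodule ℝ 𝒲) : Prop := IsClosed (Z : Set 𝒲) ∧ ¬ FiniteDimensional ℝ Z

lemma stab (Y0 : Submodule ℝ 𝒲) (h0 : Good Y0) (P : ℕ → Submodule ℝ 𝒲 → Prop) :
    ∃ Y : ℕ → Submodule ℝ 𝒲, (∀ n, Good (Y n)) ∧ Antitone Y ∧ Y 0 = Y0 ∧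
      ∀ n, (∀ Z ≤ Y n, Good Z → P n Z) ∨ ¬ P n (Y (n + 1)) := by
  have hstep : ∀ (n : ℕ) (Y : {Y : Submodule ℝ 𝒲 // Good Y}),
      ∃ Y' : {Y : Submodule ℝ 𝒲 // Good Y}, Y'.1 ≤ Y.1 ∧
        ((∀ Z ≤ Y.1, Good Z → P n Z) ∨ ¬ P n Y'.1) := by
    intro n Y
    by_cases h : ∀ Z ≤ Y.1, Good Z → P n Z
    · exact ⟨Y, le_rfl, Or.inl h⟩
    · push Not at h
      obtain ⟨Z, h1, h2, h3⟩ := h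
      exact ⟨⟨Z, h2⟩, h1, Or.inr h3⟩
  choose s hs1 hs2 using hstep
  let Y : ℕ → {Y : Submodule ℝ 𝒲 // Good Y} := fun n => Nat.rec ⟨Y0, h0⟩ (fun n Y => s n Y) n
  exact ⟨fun n => (Y n).1, fun n => (Y n).2, antitone_nat_of_succ_le fun n => hs1 n (Y n), rfl,
    fun n => hs2 n (Y n)⟩

lemma mem_closedSpan {S : Set 𝒲} {v : 𝒲} (h : v ∈ S) : v ∈ closedSpan S :=
  Submodule.le_topologicalClosure _ (Submodule.subset_span h)

lemma closedSpan_le {S : Set 𝒲} {Z : Submodule ℝ 𝒲} (hZ : IsClosed (Z : Set 𝒲)) (h : S ⊆ Z) :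
    closedSpan S ≤ Z :=
  Submodule.topologicalClosure_minimal _ (Submodule.span_le.2 h) hZ

lemma main_stab (hinf : ¬ FiniteDimensional ℝ 𝒲) :
    ∃ x : ℕ → 𝒲, (∀ n, ‖x n‖ = 1) ∧ HasC x ∧
      ∀ y : ℕ → 𝒲, HasC y → (∀ n, y n ≠ 0) → (∀ n, y n ∈ closedSpan (Set.range x)) →
        ∀ n, ∀ K : ℝ, 1 ≤ K → (∀ N, KEmb K n y (closedSpan (x '' {j | N ≤ j}))) →
          ∀ Z ≤ closedSpan (Set.range x), ¬ FiniteDimensional ℝ Z → KEmb (12 * K) n y Z := by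
  obtain ⟨x0, hx0n, -, hx0⟩ := exists_basic (fun _ => (⊤ : Submodule ℝ 𝒲)) (fun _ h => hinf
    (Module.Finite.equiv (Submodule.topEquiv : (⊤ : Submodule ℝ 𝒲) ≃ₗ[ℝ] 𝒲)))
  have hx00 : ∀ n, x0 n ≠ 0 := fun n h => by have := hx0n n; rw [h] at this; simp at this
  have hsep : TopologicalSpace.IsSeparable ((closedSpan (Set.range x0) : Submodule ℝ 𝒲) : Set 𝒲) :=
    ((Set.countable_range x0).isSeparable.span (R := ℝ)).closure
  obtain ⟨D, hDc, hD⟩ := hsep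
  have hDne : D.Nonempty := by
    by_contra h
    rw [Set.not_nonempty_iff_eq_empty] at h
    have := hD (zero_mem (closedSpan (Set.range x0)))
    simp [h] at this
  obtain ⟨d, rfl⟩ := hDc.exists_eq_range hDne
  obtain ⟨q, hq⟩ := exists_surjective_nat (List ℕ × ℕ)
  obtain ⟨Y, hYg, hYa, hY0, hY⟩ := stab (closedSpan (Set.range x0))
    ⟨Submodule.isClosed_topologicalClosure _, hx0.inf_dim hx00⟩
    (fun n Z => KEmb ((q n).2 : ℝ) (q n).1.length (fun i => d ((q n).1.getD i 0)) Z)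
  obtain ⟨x, hxn, hxY, hx⟩ := exists_basic Y fun n => (hYg n).2
  have htail : ∀ N, closedSpan (x '' {j | N ≤ j}) ≤ Y N := by
    intro N
    refine closedSpan_le (hYg N).1 ?_
    rintro _ ⟨j, hj, rfl⟩
    exact hYa hj (hxY j)
  refine ⟨x, hxn, hx, ?_⟩
  intro y hy hy0 hyx n K hK hemb Z hZ hZinf
  have hK0 : 0 < K := by linarith
  obtain ⟨κ, hκ, hκ'⟩ := hy.lower hy0 n
  obtain ⟨δ, hδ, hp⟩ := perturb hκ hκ'
  have hyx0 : ∀ i, y i ∈ closure (Set.range d) := by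
    intro i
    apply hD
    rw [← hY0]
    refine closedSpan_le (hYg 0).1 ?_ (hyx i)
    rintro _ ⟨j, rfl⟩
    exact hYa (Nat.zero_le j) (hxY j)
  have : ∀ i, ∃ k, ‖y i - d k‖ ≤ δ := by
    intro i
    obtain ⟨_, ⟨k, rfl⟩, hd⟩ := Metric.mem_closure_iff.1 (hyx0 i) δ hδ
    exact ⟨k, by rw [← dist_eq_norm]; exact hd.le⟩
  choose k hk using this
  obtain ⟨m, hm⟩ := hq (List.ofFn (fun i : Fin n => k i), ⌈2 * K⌉₊)
  have hlen : (q m).1.length = n := by rw [hm]; simp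
  have hget : ∀ i < n, (q m).1.getD i 0 = k i := by
    intro i hi; rw [hm]; simp [List.getD, hi]
  have h2 : ((q m).2 : ℝ) = (⌈2 * K⌉₊ : ℝ) := by rw [hm]
  have hYm := hY m
  simp only [hlen, h2] at hYm
  set v : ℕ → 𝒲 := fun i => d ((q m).1.getD i 0) with hv
  have hyv : SeqEquiv 2 n y v := hp v fun i hi => by
    simp only [hv]; rw [hget i hi]; exact hk i
  have hc1 : 2 * K ≤ (⌈2 * K⌉₊ : ℝ) := Nat.le_ceil _
  have hc2 : (⌈2 * K⌉₊ : ℝ) ≤ 3 * K := by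
    have := (Nat.ceil_lt_add_one (show 0 ≤ 2 * K by linarith)).le
    linarith
  have hc0 : (0 : ℝ) < (⌈2 * K⌉₊ : ℝ) := by linarith
  have hall : ∀ Z ≤ Y m, Good Z → KEmb (⌈2 * K⌉₊ : ℝ) n v Z := by
    rcases hYm with h | h
    · exact h
    · exfalso
      apply h
      exact ((hemb (m + 1)).trans hK0 two_pos hyv).mono (by positivity) (by linarith) (htail _)
  have hZc : Z.topologicalClosure ≤ closedSpan (Set.range x) :=
    Submodule.topologicalClosure_minimal _ hZ (Submodule.isClosed_topologicalClosure _)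
  have hZcinf : ¬ FiniteDimensional ℝ Z.topologicalClosure := fun h =>
    hZinf (Submodule.finiteDimensional_of_le Z.le_topologicalClosure)
  have hgood : Good (Z.topologicalClosure ⊓ closedSpan (x '' {j | m ≤ j})) := by
    constructor
    · exact (Submodule.isClosed_topologicalClosure _).inter (Submodule.isClosed_topologicalClosure _)
    · exact inf_tail hZcinf (Submodule.fg_span ((Set.finite_lt_nat m).image x))
        (hZc.trans (tail_sup x m))
  have h3 := hall _ (inf_le_right.trans (htail m)) hgood
  have h4 := (h3.trans hc0 two_pos (hyv.symm two_pos)).mono (by positivity)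
    (show (⌈2 * K⌉₊ : ℝ) * 2 ≤ 6 * K by linarith) inf_le_left
  exact (h4.of_closure (by positivity) hy hy0).mono (by positivity) (by linarith) le_rfl

lemma KEmb.block {K : ℝ} {y z : ℕ → 𝒲} (hz : IsBlockSeq y z) {Z : Submodule ℝ 𝒲}
    (h : ∀ n, KEmb K n y Z) (n : ℕ) : KEmb K n z Z := by
  classical
  obtain ⟨-, D, hD, -⟩ := hz
  choose α hα using hD
  let S := (Finset.range n).biUnion D
  let M := S.sup id + 1
  have hM : ∀ i < n, D i ⊆ Finset.range M := by
    intro i hi j hj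
    have : j ∈ S := Finset.mem_biUnion.2 ⟨i, Finset.mem_range.2 hi, hj⟩
    exact Finset.mem_range.2 (Nat.lt_succ_of_le (Finset.le_sup (f := id) this))
  obtain ⟨u, hu, he⟩ := h M
  let β : ℕ → ℕ → ℝ := fun i j => if j ∈ D i then α i j else 0
  have hzb : ∀ i < n, z i = ∑ j ∈ Finset.range M, β i j • y j := by
    intro i hi
    rw [hα i, ← Finset.sum_subset (hM i hi)]
    · exact Finset.sum_congr rfl fun j hj => by simp [β, hj]
    · intro j _ hj; simp [β, hj]
  refine ⟨fun i => ∑ j ∈ Finset.range M, β i j • u j,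
    fun i => Submodule.sum_mem _ fun j _ => Submodule.smul_mem _ _ (hu j), ?_⟩
  intro a
  have key : ∀ w : ℕ → 𝒲, ∑ i ∈ Finset.range n, a i • ∑ j ∈ Finset.range M, β i j • w j
      = ∑ j ∈ Finset.range M, (∑ i ∈ Finset.range n, a i * β i j) • w j := by
    intro w
    simp only [Finset.smul_sum, Finset.sum_smul, smul_smul]
    exact Finset.sum_comm
  have e : ∑ i ∈ Finset.range n, a i • z i
      = ∑ j ∈ Finset.range M, (∑ i ∈ Finset.range n, a i * β i j) • y j := by
    rw [← key]
    exact Finset.sum_congr rfl fun i hi => by rw [hzb i (Finset.mem_range.1 hi)]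
  rw [e, key]
  exact he _


lemma HasC.shift {x : ℕ → 𝒲} (hx : HasC x) (hn : ∀ n, ‖x n‖ = 1) (a : ℕ) :
    ∃ L : ℝ, 1 ≤ L ∧ ∀ N, a ≤ N → ∃ S : 𝒲 →L[ℝ] 𝒲,
      ∀ w ∈ closedSpan (x '' {m | m < a ∨ N + a ≤ m}),
        S w ∈ closedSpan (x '' {m | N ≤ m}) ∧ ‖S w‖ ≤ L * ‖w‖ ∧ ‖w‖ ≤ L * ‖S w‖ := by
  have h0 : ∀ n, x n ≠ 0 := fun n h => by have := hn n; rw [h] at this; simp at this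
  obtain ⟨φ, hφ, hφn⟩ := hx.biorth h0
  have hφn' : ∀ i, ‖φ i‖ ≤ 4 := fun i => by have := hφn i; rwa [hn, div_one] at this
  refine ⟨1 + a * 8, by linarith [(Nat.cast_nonneg a : (0 : ℝ) ≤ a)], fun N hN => ?_⟩
  have bound : ∀ (p q r : ℕ → ℕ) (w : 𝒲),
      ‖w + ∑ i ∈ Finset.range a, φ (p i) w • (x (q i) - x (r i))‖ ≤ (1 + a * 8) * ‖w‖ := by
    intro p q r w
    calc _ ≤ ‖w‖ + ‖∑ i ∈ Finset.range a, φ (p i) w • (x (q i) - x (r i))‖ := norm_add_le _ _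
      _ ≤ ‖w‖ + ∑ i ∈ Finset.range a, ‖φ (p i) w • (x (q i) - x (r i))‖ := by
        gcongr; exact norm_sum_le _ _
      _ ≤ ‖w‖ + ∑ i ∈ Finset.range a, (4 * ‖w‖) * 2 := by
        gcongr with i _
        rw [norm_smul]
        have h1 : ‖φ (p i) w‖ ≤ 4 * ‖w‖ := ((φ (p i)).le_opNorm w).trans (by
          gcongr; exact hφn' _)
        have h2 : ‖x (q i) - x (r i)‖ ≤ 2 := (norm_sub_le _ _).trans (by rw [hn, hn]; norm_num)
        exact mul_le_mul h1 h2 (norm_nonneg _) (by positivity)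
      _ = _ := by rw [Finset.sum_const, Finset.card_range, nsmul_eq_mul]; ring
  let S : 𝒲 →L[ℝ] 𝒲 := ContinuousLinearMap.id ℝ 𝒲 +
    ∑ i ∈ Finset.range a, (φ i).smulRight (x (N + i) - x i)
  let R : 𝒲 →L[ℝ] 𝒲 := ContinuousLinearMap.id ℝ 𝒲 +
    ∑ i ∈ Finset.range a, (φ (N + i)).smulRight (x i - x (N + i))
  have hS : ∀ w, S w = w + ∑ i ∈ Finset.range a, φ i w • (x (N + i) - x i) := by
    intro w; simp [S]
  have hR : ∀ w, R w = w + ∑ i ∈ Finset.range a, φ (N + i) w • (x i - x (N + i)) := by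
    intro w; simp [R]
  have hS1 : ∀ m < a, S (x m) = x (N + m) := by
    intro m hm; rw [hS]; simp [hφ, hm]
  have hS2 : ∀ m, a ≤ m → S (x m) = x m := by
    intro m hm
    rw [hS, Finset.sum_eq_zero, add_zero]
    intro i hi
    have := Finset.mem_range.1 hi
    rw [hφ, if_neg (by omega), zero_smul]
  have hR1 : ∀ m < a, R (x (N + m)) = x m := by
    intro m hm; rw [hR]; simp [hφ, hm]
  have hR2 : ∀ m, N + a ≤ m → R (x m) = x m := by
    intro m hm
    rw [hR, Finset.sum_eq_zero, add_zero]
    intro i hi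
    have := Finset.mem_range.1 hi
    rw [hφ, if_neg (by omega), zero_smul]
  refine ⟨S, fun w hw => ?_⟩
  have hRS : R (S w) = w := by
    have hcl : IsClosed ((LinearMap.eqLocus ((R.comp S : 𝒲 →L[ℝ] 𝒲) : 𝒲 →ₗ[ℝ] 𝒲)
        LinearMap.id : Submodule ℝ 𝒲) : Set 𝒲) :=
      isClosed_eq (R.comp S).continuous continuous_id
    refine closedSpan_le hcl ?_ hw
    rintro _ ⟨m, hm, rfl⟩
    change R (S (x m)) = x m
    rcases hm with hm | hm
    · rw [hS1 m hm, hR1 m hm]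
    · rw [hS2 m (by omega), hR2 m hm]
  refine ⟨?_, ?_, ?_⟩
  · have hcl : IsClosed (((closedSpan (x '' {m | N ≤ m})).comap (S : 𝒲 →ₗ[ℝ] 𝒲) :
        Submodule ℝ 𝒲) : Set 𝒲) :=
      IsClosed.preimage S.continuous (Submodule.isClosed_topologicalClosure _)
    refine closedSpan_le hcl ?_ hw
    rintro _ ⟨m, hm, rfl⟩
    change S (x m) ∈ closedSpan (x '' {m | N ≤ m})
    rcases hm with hm | hm
    · rw [hS1 m hm]; exact mem_closedSpan ⟨N + m, Nat.le_add_right _ _, rfl⟩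
    · rw [hS2 m (by omega)]
      exact mem_closedSpan ⟨m, show N ≤ m by omega, rfl⟩
  · rw [hS]; exact bound _ _ _ _
  · conv_lhs => rw [← hRS, hR]
    exact bound _ _ _ _

lemma not_kemb_gap {x : ℕ → 𝒲} (hx : HasC x) (hn : ∀ n, ‖x n‖ = 1) {y : ℕ → 𝒲}
    (H : ∀ K : ℝ, 1 ≤ K → ∃ N n, ¬ KEmb K n y (closedSpan (x '' {j | N ≤ j})))
    (a : ℕ) (K : ℝ) (hK : 1 ≤ K) :
    ∃ b, a ≤ b ∧ ∃ n, ¬ KEmb K n y (closedSpan (x '' {m | m ∉ Finset.Icc a b})) := by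
  have hK0 : 0 < K := by linarith
  obtain ⟨L, hL, hS⟩ := hx.shift hn a
  have hL0 : 0 < L := by linarith
  obtain ⟨N, n, hNn⟩ := H (L * K) (by nlinarith)
  obtain ⟨S, hS⟩ := hS (max N a) (le_max_right _ _)
  refine ⟨max N a + a, by omega, n, ?_⟩
  rintro ⟨u, hu, he⟩
  have hu' : ∀ w ∈ closedSpan (x '' {m | m ∉ Finset.Icc a (max N a + a)}),
      w ∈ closedSpan (x '' {m | m < a ∨ max N a + a ≤ m}) := by
    refine closedSpan_le (Submodule.isClosed_topologicalClosure _) ?_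
    rintro _ ⟨m, hm, rfl⟩
    refine mem_closedSpan ⟨m, ?_, rfl⟩
    have hm' : m ∉ Finset.Icc a (max N a + a) := hm
    rw [Finset.mem_Icc] at hm'
    change m < a ∨ max N a + a ≤ m
    omega
  apply hNn
  have h1 : KEmb (L * K) n y (closedSpan (x '' {j | max N a ≤ j})) := by
    refine ⟨fun i => S (u i), fun i => (hS _ (hu' _ (hu i))).1, ?_⟩
    refine SeqEquiv.trans hL0 hK0 (y := u) ?_ he
    rw [seqEquiv_iff hL0]
    intro c
    have e : ∑ i ∈ Finset.range n, c i • S (u i) = S (∑ i ∈ Finset.range n, c i • u i) := by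
      simp
    rw [e]
    exact (hS _ (Submodule.sum_mem _ fun i _ => Submodule.smul_mem _ _ (hu' _ (hu i)))).2
  refine h1.mono (by positivity) le_rfl ?_
  refine closedSpan_le (Submodule.isClosed_topologicalClosure _) ?_
  rintro _ ⟨m, hm, rfl⟩
  exact mem_closedSpan ⟨m, (show N ≤ m from (le_max_left N a).trans hm), rfl⟩

lemma embTree_prefix {x : ℕ → 𝒲} {Y : Set 𝒲} {K : ℝ} {l l' : List 𝒲}
    (h : l ++ l' ∈ embTree x Y K) : l ∈ embTree x Y K := by
  refine ⟨fun v hv => h.1 v (List.mem_append_left _ hv), ?_⟩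
  have h2 := h.2.restrict (m := l.length) (by simp)
  refine h2.congr fun i hi => ?_
  simp [List.getD, List.getElem?_append_left hi]

lemma embIndex_le_omega {x : ℕ → 𝒲} {Y : Set 𝒲}
    (h : ∀ K : ℝ, 1 ≤ K → ∃ n, ∀ l ∈ embTree x Y K, l.length ≤ n) :
    embIndex x Y ≤ (Ordinal.omega0 : WithTop Ordinal) := by
  have key : ∀ K : ℝ, 1 ≤ K → treeRank (embTree x Y K) ≤ ((Ordinal.omega0 : Ordinal) : WithTop Ordinal) := by
    intro K hK
    obtain ⟨n, hn⟩ := h K hK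
    have hlen : ∀ t s : embTree x Y K, (s.val <+: t.val ∧ s.val ≠ t.val) →
        n - t.val.length < n - s.val.length := by
      intro t s hts
      have h1 := hts.1.length_le
      have h2 : s.val.length ≠ t.val.length := fun e => hts.2 (hts.1.eq_of_length e)
      have h3 := hn t.val t.2
      omega
    have hwf : WellFounded (fun t s : embTree x Y K => s.val <+: t.val ∧ s.val ≠ t.val) :=
      Subrelation.wf (fun {a b} hab => hlen a b hab)
        (measure (fun s : embTree x Y K => n - s.val.length)).wf
    have hrank : ∀ s, (hwf.apply s).rank ≤ ((n - s.val.length : ℕ) : Ordinal) := by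
      intro s
      induction s using hwf.induction with
      | _ s ih =>
        rw [Acc.rank_eq]
        refine Ordinal.iSup_le fun b => ?_
        have h1 := ih b.1 b.2
        have h2 := hlen _ _ b.2
        refine (Order.succ_le_succ h1).trans ?_
        rw [Order.succ_le_iff]
        exact_mod_cast h2
    unfold treeRank
    rw [dif_pos hwf]
    refine WithTop.coe_le_coe.2 (Ordinal.iSup_le fun s => ?_)
    rw [Order.succ_le_iff]
    exact (hrank s).trans_lt (Ordinal.natCast_lt_omega0 _)
  unfold embIndex
  rw [if_neg]
  · refine WithTop.coe_le_coe.2 (csSup_le' ?_)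
    rintro o ⟨K, hK, ho⟩
    have := key K hK
    rw [← ho] at this
    exact WithTop.coe_le_coe.1 this
  · rintro ⟨K, hK, hT⟩
    have := key K hK
    rw [hT] at this
    simp at this

lemma tight_of {x : ℕ → 𝒲} (hx : HasC x) (hn : ∀ n, ‖x n‖ = 1)
    (H : ∀ y, IsBlockSeq x y → ∀ K : ℝ, 1 ≤ K →
      ∃ N n, ¬ KEmb K n y (closedSpan (x '' {j | N ≤ j}))) :
    IsAlphaTight x Ordinal.omega0 := by
  intro y hy
  choose b hb1 hb2 using fun (j a : ℕ) =>
    not_kemb_gap hx hn (H y hy) a ((j : ℝ) + 1) (by linarith [(Nat.cast_nonneg j : (0 : ℝ) ≤ j)])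
  let s : ℕ → ℕ := fun n => Nat.rec 0 (fun j a => b j a + 1) n
  have hs : ∀ j, s (j + 1) = b j (s j) + 1 := fun j => rfl
  refine ⟨fun j => Finset.Icc (s j) (b j (s j)), ⟨fun m => ⟨_, _, hb1 _ _, rfl⟩, ?_⟩, ?_⟩
  · intro m i hi j hj
    rw [Finset.mem_Icc] at hi hj
    rw [hs] at hj
    omega
  · intro A hA
    apply embIndex_le_omega
    intro K hK
    obtain ⟨j, hjA, hj⟩ := hA.exists_gt ⌈K⌉₊
    have hjK : K ≤ (j : ℝ) + 1 := by
      have h1 : K ≤ ⌈K⌉₊ := Nat.le_ceil K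
      have h2 : ((⌈K⌉₊ : ℕ) : ℝ) ≤ j := by exact_mod_cast hj.le
      linarith
    obtain ⟨n, hnn⟩ := hb2 j (s j)
    refine ⟨n, fun l hl => ?_⟩
    by_contra hlt
    push Not at hlt
    apply hnn
    have hle : residualSpace x (fun j => Finset.Icc (s j) (b j (s j))) A ≤
        closedSpan (x '' {m | m ∉ Finset.Icc (s j) (b j (s j))}) := by
      refine closedSpan_le (Submodule.isClosed_topologicalClosure _) ?_
      rintro _ ⟨m, hm, rfl⟩
      exact mem_closedSpan ⟨m, hm j hjA, rfl⟩
    refine ⟨fun i => l.getD i 0, fun i => hle ?_, (hl.2.restrict hlt.le).mono (by linarith) hjK⟩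
    change l.getD i 0 ∈ _
    rcases lt_or_ge i l.length with h | h
    · have : l.getD i 0 = l[i] := by simp [List.getD, h]
      rw [this]
      exact hl.1 _ (List.getElem_mem h)
    · have : l.getD i 0 = 0 := by simp [List.getD, h]
      rw [this]
      exact zero_mem _

lemma extend {z : ℕ → 𝒲} (hz : HasC z) {K0 : ℝ} (hK0 : 1 ≤ K0) {X : Submodule ℝ 𝒲}
    (hE : ∀ n, ∀ Z ≤ X, ¬ FiniteDimensional ℝ Z → KEmb K0 n z Z) {Y : Submodule ℝ 𝒲}
    (hYX : Y ≤ X) (hY : ¬ FiniteDimensional ℝ Y) {c : ℝ} (hc : 1 ≤ c) {l : List 𝒲}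
    (hl : l ∈ embTree z (Y : Set 𝒲) c) (k : ℕ) :
    ∃ l' : List 𝒲, l'.length = k ∧ l ++ l' ∈ embTree z (Y : Set 𝒲) (2 * c + 3 * K0) := by
  have hcpos : 0 < c := by linarith
  have hK0pos : 0 < K0 := by linarith
  set F : Submodule ℝ 𝒲 := Submodule.span ℝ {v | v ∈ l} with hFdef
  have hF : F.FG := Submodule.fg_span (List.finite_toSet l)
  have : FiniteDimensional ℝ F := Module.Finite.iff_fg.2 hF
  obtain ⟨ι, _, g, hg⟩ := mazur F (θ := 1 / 2) (by norm_num)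
  obtain ⟨u, hu, he⟩ := hE (l.length + k) _ (inf_le_left.trans hYX) (inf_ker hY g)
  refine ⟨List.ofFn (fun i : Fin k => u (l.length + i)), by simp, ?_, ?_⟩
  · intro v hv
    rw [List.mem_append, List.mem_ofFn] at hv
    rcases hv with hv | ⟨i, rfl⟩
    · exact hl.1 v hv
    · exact (hu _).1
  · rw [List.length_append, List.length_ofFn, seqEquiv_iff (by positivity)]
    intro a
    have hl2 := (seqEquiv_iff hcpos).1 hl.2 a
    have he2 := (seqEquiv_iff hK0pos).1 he (fun i => if i < l.length then 0 else a i)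
    have hsplit : ∀ w : ℕ → 𝒲, ∑ i ∈ Finset.range (l.length + k),
        (if i < l.length then 0 else a i) • w i
        = ∑ i ∈ Finset.range k, a (l.length + i) • w (l.length + i) := by
      intro w
      rw [Finset.sum_range_add, Finset.sum_eq_zero, zero_add]
      · exact Finset.sum_congr rfl fun i _ => by rw [if_neg (by omega)]
      · intro i hi
        rw [if_pos (Finset.mem_range.1 hi), zero_smul]
    rw [hsplit, hsplit] at he2
    have hsum : ∑ i ∈ Finset.range (l.length + k),
        a i • (l ++ List.ofFn (fun i : Fin k => u (l.length + i))).getD i 0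
        = ∑ i ∈ Finset.range l.length, a i • l.getD i 0
          + ∑ i ∈ Finset.range k, a (l.length + i) • u (l.length + i) := by
      rw [Finset.sum_range_add]
      congr 1
      · refine Finset.sum_congr rfl fun i hi => ?_
        have hi' := Finset.mem_range.1 hi
        simp [List.getD, List.getElem?_append_left hi']
      · refine Finset.sum_congr rfl fun i hi => ?_
        have hi' := Finset.mem_range.1 hi
        simp [List.getD, hi']
    rw [hsum]
    have hzp := hz.partial_le a (Nat.le_add_right l.length k)
    rw [Finset.sum_range_add (fun i => a i • z i)] at hzp ⊢
    set f := ∑ i ∈ Finset.range l.length, a i • l.getD i 0 with hf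
    set w := ∑ i ∈ Finset.range k, a (l.length + i) • u (l.length + i) with hw
    set zf := ∑ i ∈ Finset.range l.length, a i • z i with hzf
    set zw := ∑ i ∈ Finset.range k, a (l.length + i) • z (l.length + i) with hzw
    have hfF : f ∈ F := by
      refine Submodule.sum_mem _ fun i hi => Submodule.smul_mem _ _ (Submodule.subset_span ?_)
      have hi' := Finset.mem_range.1 hi
      have : l.getD i 0 = l[i] := by simp [List.getD, hi']
      rw [this]
      exact List.getElem_mem hi'
    have hwg : g w = 0 := by
      have : w ∈ LinearMap.ker (g : 𝒲 →ₗ[ℝ] (ι → ℝ)) :=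
        Submodule.sum_mem _ fun i _ => Submodule.smul_mem _ _ (hu _).2
      exact this
    have h1 := hg f hfF w hwg
    have tri : ∀ p q : 𝒲, ‖q‖ ≤ ‖p + q‖ + ‖p‖ := by
      intro p q
      calc ‖q‖ = ‖(p + q) - p‖ := by congr 1; abel
        _ ≤ _ := norm_sub_le _ _
    have h2 := tri f w
    have h3 := tri zf zw
    have h4 := norm_add_le f w
    have h5 := norm_add_le zf zw
    constructor
    · calc ‖f + w‖ ≤ ‖f‖ + ‖w‖ := h4
        _ ≤ c * ‖zf‖ + K0 * ‖zw‖ := add_le_add hl2.1 he2.1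
        _ ≤ c * (2 * ‖zf + zw‖) + K0 * (3 * ‖zf + zw‖) := by gcongr; linarith
        _ = _ := by ring
    · calc ‖zf + zw‖ ≤ ‖zf‖ + ‖zw‖ := h5
        _ ≤ c * ‖f‖ + K0 * ‖w‖ := add_le_add hl2.2 he2.2
        _ ≤ c * (2 * ‖f + w‖) + K0 * (3 * ‖f + w‖) := by gcongr <;> linarith
        _ = _ := by ring

lemma rank_chain {x : ℕ → 𝒲} {Y : Set 𝒲} {K : ℝ}
    (h : WellFounded (fun t s : embTree x Y K => s.val <+: t.val ∧ s.val ≠ t.val))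
    (t : embTree x Y K) (l' : List 𝒲) :
    ∀ s : embTree x Y K, t.val = s.val ++ l' →
      (h.apply t).rank + (l'.length : Ordinal) ≤ (h.apply s).rank := by
  induction l' with
  | nil =>
    intro s hs
    have : t = s := Subtype.ext (by simpa using hs)
    subst this
    simp
  | cons w l' ih =>
    intro s hs
    have hs' : t.val = (s.val ++ [w]) ++ l' := by rw [hs]; simp
    have hmem : s.val ++ [w] ∈ embTree x Y K := embTree_prefix (l' := l') (by rw [← hs']; exact t.2)
    have h1 := ih ⟨_, hmem⟩ hs'
    have hrel : s.val <+: (s.val ++ [w]) ∧ s.val ≠ s.val ++ [w] := ⟨List.prefix_append _ _, by simp⟩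
    have h2 : (h.apply ⟨_, hmem⟩).rank < (h.apply s).rank :=
      Acc.rank_lt_of_rel (a := (⟨_, hmem⟩ : embTree x Y K)) (h.apply s) hrel
    have h3 := Order.succ_le_of_lt (h1.trans_lt h2)
    rw [List.length_cons, Nat.cast_succ, ← add_assoc]
    rwa [← Order.succ_eq_add_one]

lemma rank_ge {z : ℕ → 𝒲} (hz : HasC z) {K0 : ℝ} (hK0 : 1 ≤ K0) {X : Submodule ℝ 𝒲}
    (hE : ∀ n, ∀ Z ≤ X, ¬ FiniteDimensional ℝ Z → KEmb K0 n z Z) {Y : Submodule ℝ 𝒲}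
    (hYX : Y ≤ X) (hY : ¬ FiniteDimensional ℝ Y) (m : ℕ) : ∀ c : ℝ, 1 ≤ c → ∃ K, c ≤ K ∧
      ∀ (h : WellFounded (fun t s : embTree z (Y : Set 𝒲) K => s.val <+: t.val ∧ s.val ≠ t.val))
        (s : embTree z (Y : Set 𝒲) K), s.val ∈ embTree z (Y : Set 𝒲) c →
          Ordinal.omega0 * (m : Ordinal) ≤ (h.apply s).rank := by
  induction m with
  | zero => exact fun c _ => ⟨c, le_rfl, fun h s _ => by simp⟩
  | succ m ih =>
    intro c hc
    obtain ⟨K, hK, hr⟩ := ih (2 * c + 3 * K0) (by linarith)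
    refine ⟨K, by linarith, fun h s hs => ?_⟩
    rw [Nat.cast_succ, mul_add, mul_one]
    rw [Ordinal.add_le_iff_of_isSuccLimit Ordinal.isSuccLimit_omega0]
    intro b hb
    obtain ⟨k, rfl⟩ := Ordinal.lt_omega0.1 hb
    obtain ⟨l', hk, hl'⟩ := extend hz hK0 hE hYX hY hc hs k
    have hl'K : s.val ++ l' ∈ embTree z (Y : Set 𝒲) K := ⟨hl'.1, hl'.2.mono (by linarith) hK⟩
    have h1 := hr h ⟨_, hl'K⟩ hl'
    have h2 := rank_chain h ⟨_, hl'K⟩ l' s rfl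
    rw [hk] at h2
    exact (add_le_add_left h1 _).trans h2

lemma embIndex_ge {x : ℕ → 𝒲} {Y : Set 𝒲}
    (H : ∀ m : ℕ, ∃ K : ℝ, 1 ≤ K ∧
      ((Ordinal.omega0 * (m : Ordinal) : Ordinal) : WithTop Ordinal) ≤ treeRank (embTree x Y K)) :
    ((Ordinal.omega0 * Ordinal.omega0 : Ordinal) : WithTop Ordinal) ≤ embIndex x Y := by
  unfold embIndex
  split_ifs with htop
  · exact le_top
  · refine WithTop.coe_le_coe.2 ?_
    rw [Ordinal.mul_le_iff_of_isSuccLimit Ordinal.isSuccLimit_omega0]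
    intro b hb
    obtain ⟨m, rfl⟩ := Ordinal.lt_omega0.1 hb
    obtain ⟨K, hK, hm⟩ := H m
    have hne : treeRank (embTree x Y K) ≠ ⊤ := fun h => htop ⟨K, hK, h⟩
    obtain ⟨o, ho⟩ := WithTop.ne_top_iff_exists.1 hne
    rw [← ho] at hm
    refine (WithTop.coe_le_coe.1 hm).trans (le_csSup ?_ ⟨K, hK, ho⟩)
    have hsm : Small.{0} {o : Ordinal | ∃ K : ℝ, 1 ≤ K ∧
        (o : WithTop Ordinal) = treeRank (embTree x Y K)} := by
      refine small_subset (s := Set.range fun K : ℝ => (treeRank (embTree x Y K)).untopD 0) ?_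
      rintro o ⟨K, _, ho⟩
      exact ⟨K, by simp [← ho]⟩
    exact Ordinal.bddAbove_of_small

lemma minimal_of {y : ℕ → 𝒲} (hy : HasC y) {K0 : ℝ} (hK0 : 1 ≤ K0)
    (hE : ∀ n, ∀ Z ≤ closedSpan (Set.range y), ¬ FiniteDimensional ℝ Z → KEmb K0 n y Z) :
    IsAlphaMinimal y (Ordinal.omega0 * Ordinal.omega0) := by
  intro z hz Y hYX hY
  apply embIndex_ge
  intro m
  obtain ⟨K, hK, hr⟩ := rank_ge (hy.block hz) hK0
    (fun n Z hZ hZi => KEmb.block hz (fun n => hE n Z hZ hZi) n) hYX hY m 1 le_rfl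
  refine ⟨K, hK, ?_⟩
  unfold treeRank
  split_ifs with h
  · refine WithTop.coe_le_coe.2 ?_
    have hnil : ∀ c : ℝ, ([] : List 𝒲) ∈ embTree z (Y : Set 𝒲) c := by
      intro c
      refine ⟨by simp, fun a => by simp⟩
    refine (hr h ⟨[], hnil K⟩ (hnil 1)).trans ((Order.le_succ _).trans ?_)
    exact Ordinal.le_iSup (fun s : embTree z (Y : Set 𝒲) K => Order.succ (h.apply s).rank) ⟨[], hnil K⟩
  · exact le_top

/-- Every infinite-dimensional Banach space contains an
infinite-dimensional closed subspace with a Schauder basis `(e n)` such that `[e n]` is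
either `ω`-tight or `ω²`-minimal. -/
theorem exists_omega_tight_or_omega_sq_minimal_subspace
    (𝒲 : Type) [NormedAddCommGroup 𝒲] [NormedSpace ℝ 𝒲] [CompleteSpace 𝒲]
    (hinf : ¬FiniteDimensional ℝ 𝒲) :
    ∃ e : ℕ → 𝒲, IsBasicSeq e ∧ (∀ n, e n ≠ 0) ∧
      ¬FiniteDimensional ℝ (closedSpan (Set.range e)) ∧
      (IsAlphaTight e Ordinal.omega0 ∨
        IsAlphaMinimal e (Ordinal.omega0 * Ordinal.omega0)) := by
  obtain ⟨x, hxn, hx, hst⟩ := main_stab hinf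
  have hx0 : ∀ n, x n ≠ 0 := fun n h => by have := hxn n; rw [h] at this; simp at this
  by_cases H : ∀ y, IsBlockSeq x y → ∀ K : ℝ, 1 ≤ K →
      ∃ N n, ¬ KEmb K n y (closedSpan (x '' {j | N ≤ j}))
  · exact ⟨x, hx.isBasic hx0, hx0, hx.inf_dim hx0, Or.inl (tight_of hx hxn H)⟩
  · push Not at H
    obtain ⟨y, hy, K, hK, hemb⟩ := H
    have hyC := hx.block hy
    have hyx : ∀ n, y n ∈ closedSpan (Set.range x) := fun n =>
      Submodule.le_topologicalClosure _ (block_mem_span hy n)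
    have hle : closedSpan (Set.range y) ≤ closedSpan (Set.range x) := by
      refine closedSpan_le (Submodule.isClosed_topologicalClosure _) ?_
      rintro _ ⟨n, rfl⟩
      exact hyx n
    refine ⟨y, hyC.isBasic hy.1, hy.1, hyC.inf_dim hy.1, Or.inr ?_⟩
    exact minimal_of hyC (K0 := 12 * K) (by linarith) fun n Z hZ hZi =>
      hst y hyC hy.1 hyx n K hK (fun N => hemb N n) Z (hZ.trans hle) hZi

end Rosendal
end

section
/- Ramsey determinacy of adversarial α-games: Let α be a countable ordinal and T ⊆ W^{<ℕ} an arbitrary set of finite sequences of nonzero vectors of W. Then for every block subspace X ⊆ W there is a block subspace Y ⊆ X such that either (1) player II has a strategy in the game A^α_Y to play in T, or (2) player I has a strategy in the game B^α_Y to play in the complement of T. -/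
open Filter Topology

namespace Rosendal

variable {𝒲 : Type} [NormedAddCommGroup 𝒲] [NormedSpace ℝ 𝒲]

/-- The outcome `l = (x 0, …, x k)` satisfies `(x 0, …, x k) ∼_K (y 0, …, y k)`. -/
def OutcomeEquiv (K : ℝ) (l : List 𝒲) (y : ℕ → 𝒲) : Prop :=
  SeqEquiv K l.length (fun i => l.getD i 0) y

/-- The outcome `l = (u 0, v 0, u 1, v 1, …, u k, v k)` satisfies
`(u 0, …, u k) ∼_K (v 0, …, v k)`. -/
def PairOutcomeEquiv (K : ℝ) (l : List 𝒲) : Prop :=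
  SeqEquiv K (l.length / 2) (fun i => l.getD (2 * i) 0) (fun i => l.getD (2 * i + 1) 0)

/-- The setting of Section 2 of the paper: a Banach space `𝒲` with a Schauder basis
`(e n)`, a countable subfield `𝔽 ⊆ ℝ` closed under the norms of finite `𝔽`-linear
combinations of the basis, and the countable `𝔽`-vector space `W` spanned by `(e n)`. -/
structure Frame (𝒲 : Type) [NormedAddCommGroup 𝒲] [NormedSpace ℝ 𝒲] : Type where
  e : ℕ → 𝒲
  complete : CompleteSpace 𝒲
  basis : IsSchauderBasis e
  𝔽 : Subfield ℝ
  countable : (𝔽 : Set ℝ).Countable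
  norm_mem : ∀ (s : Finset ℕ) (a : ℕ → ℝ), (∀ i ∈ s, a i ∈ 𝔽) →
    ‖∑ i ∈ s, a i • e i‖ ∈ 𝔽

namespace Frame

variable {𝒲 : Type} [NormedAddCommGroup 𝒲] [NormedSpace ℝ 𝒲] (ctx : Frame 𝒲)

/-- The `𝔽`-linear span of a set of vectors. -/
def fspan (S : Set 𝒲) : Set 𝒲 :=
  {v | ∃ t : Finset 𝒲, ↑t ⊆ S ∧ ∃ c : 𝒲 → ℝ, (∀ w, c w ∈ ctx.𝔽) ∧
    v = ∑ w ∈ t, c w • w}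

/-- The countable `𝔽`-vector space `W` with basis `(e n)`. -/
def W : Set 𝒲 := ctx.fspan (Set.range ctx.e)

/-- `(y n)` is a block sequence with respect to the reference block basis `(b n)`:
a sequence of nonzero vectors of the `𝔽`-span of `(b n)` with successive supports. -/
def BlockSeqRel (b y : ℕ → 𝒲) : Prop :=
  (∀ n, y n ∈ ctx.fspan (Set.range b)) ∧ (∀ n, y n ≠ 0) ∧
  ∃ D : ℕ → Finset ℕ, (∀ n, SuppIn b (y n) (D n)) ∧
    ∀ n, ∀ i ∈ D n, ∀ j ∈ D (n + 1), i < j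

/-- `(y n)` is a block sequence (with respect to the basis `(e n)` of `W`). -/
def IsBlockSeq (y : ℕ → 𝒲) : Prop := ctx.BlockSeqRel ctx.e y

/-- `Y` is a block subspace of `X`: the `𝔽`-span of an infinite block sequence of
vectors of `X`. -/
def IsBlockSubspaceOf (Y X : Set 𝒲) : Prop :=
  ∃ y : ℕ → 𝒲, ctx.IsBlockSeq y ∧ (∀ n, y n ∈ X) ∧ Y = ctx.fspan (Set.range y)

/-- `Y` is a block subspace of `W`. -/
def IsBlockSubspace (Y : Set 𝒲) : Prop := ctx.IsBlockSubspaceOf Y ctx.W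

/-- `F` is a finite-dimensional `𝔽`-subspace of `X`. -/
def IsFinDimIn (F X : Set 𝒲) : Prop :=
  ∃ t : Finset 𝒲, ↑t ⊆ X ∧ F = ctx.fspan ↑t

/-- `n < F`: every vector of `F` is supported on basis vectors of index `> n`. -/
def NatLt (n : ℕ) (F : Set 𝒲) : Prop :=
  ∀ x ∈ F, ∃ s : Finset ℕ, SuppIn ctx.e x s ∧ ∀ i ∈ s, n < i

/-- `V` is an `𝔽`-subspace of `𝒲`. -/
def IsSubspace (V : Set 𝒲) : Prop :=
  (0 : 𝒲) ∈ V ∧ (∀ u v : 𝒲, u ∈ V → v ∈ V → u + v ∈ V) ∧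
    ∀ c : ℝ, c ∈ ctx.𝔽 → ∀ v ∈ V, c • v ∈ V

/-- `V` is infinite-dimensional (not contained in a finitely generated subspace). -/
def IsInfDim (V : Set 𝒲) : Prop :=
  ¬∃ t : Finset 𝒲, V ⊆ ctx.fspan ↑t

/-- Game values of the asymptotic game `F^β_X`, for player II, computed by transfinite
recursion on the ordinal bound.  `IIWinsF X S β Facc vec` states: in the asymptotic game
below `X`, from a position where the vectors `vec` have been played and the
finite-dimensional subspaces played by II span `Facc`, and where I must now play a natural
number together with an ordinal `< β`, player II has a strategy so that the final outcome
lies in `S`. -/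
noncomputable def IIWinsF (X : Set 𝒲) (S : Set (List 𝒲)) :
    Ordinal → Set 𝒲 → List 𝒲 → Prop :=
  WellFounded.fix (C := fun _ : Ordinal => Set 𝒲 → List 𝒲 → Prop) Ordinal.lt_wf
    (fun β ih Facc vec =>
      ∀ n : ℕ, ∀ ξ : Ordinal, ∀ hξ : ξ < β,
        ∃ F : Set 𝒲, ctx.IsFinDimIn F X ∧ ctx.NatLt n F ∧
          ∃ x : 𝒲, x ≠ 0 ∧ x ∈ ctx.fspan (Facc ∪ F) ∧
            (ξ = 0 → vec ++ [x] ∈ S) ∧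
            (ξ ≠ 0 → ih ξ hξ (ctx.fspan (Facc ∪ F)) (vec ++ [x])))

/-- Player II has a strategy in the asymptotic game `F^β_X` to play an outcome in `S`. -/
noncomputable def IIStratF (X : Set 𝒲) (β : Ordinal) (S : Set (List 𝒲)) : Prop :=
  (β = 0 → ([] : List 𝒲) ∈ S) ∧ (β ≠ 0 → ctx.IIWinsF X S β (ctx.fspan ∅) [])

/-- Game values of the asymptotic game `F^β_X` for player I (who plays the integers and
the ordinals, trying to steer the outcome into `S`). -/
noncomputable def IWinsF (X : Set 𝒲) (S : Set (List 𝒲)) :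
    Ordinal → Set 𝒲 → List 𝒲 → Prop :=
  WellFounded.fix (C := fun _ : Ordinal => Set 𝒲 → List 𝒲 → Prop) Ordinal.lt_wf
    (fun β ih Facc vec =>
      ∃ n : ℕ, ∃ ξ : Ordinal, ∃ hξ : ξ < β,
        ∀ F : Set 𝒲, ctx.IsFinDimIn F X → ctx.NatLt n F →
        ∀ x : 𝒲, x ≠ 0 → x ∈ ctx.fspan (Facc ∪ F) →
          (ξ = 0 → vec ++ [x] ∈ S) ∧
          (ξ ≠ 0 → ih ξ hξ (ctx.fspan (Facc ∪ F)) (vec ++ [x])))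

/-- Player I has a strategy in the asymptotic game `F^β_X` to play an outcome in `S`. -/
noncomputable def IStratF (X : Set 𝒲) (β : Ordinal) (S : Set (List 𝒲)) : Prop :=
  (β = 0 → ([] : List 𝒲) ∈ S) ∧ (β ≠ 0 → ctx.IWinsF X S β (ctx.fspan ∅) [])

/-- Game values of the Gowers game `G^α_X` for player II. -/
noncomputable def IIWinsG (X : Set 𝒲) (S : Set (List 𝒲)) :
    Ordinal → Set 𝒲 → List 𝒲 → Prop :=
  WellFounded.fix (C := fun _ : Ordinal => Set 𝒲 → List 𝒲 → Prop) Ordinal.lt_wf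
    (fun α ih Facc vec =>
      ∀ Y : Set 𝒲, ctx.IsBlockSubspaceOf Y X →
      ∀ ξ : Ordinal, ∀ hξ : ξ < α,
        ∃ F : Set 𝒲, ctx.IsFinDimIn F Y ∧
          ∃ x : 𝒲, x ≠ 0 ∧ x ∈ ctx.fspan (Facc ∪ F) ∧
            (ξ = 0 → vec ++ [x] ∈ S) ∧
            (ξ ≠ 0 → ih ξ hξ (ctx.fspan (Facc ∪ F)) (vec ++ [x])))

/-- Player II has a strategy in the generalised Gowers game `G^α_X` to play in `S`. -/
noncomputable def IIStratG (X : Set 𝒲) (α : Ordinal) (S : Set (List 𝒲)) : Prop :=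
  (α = 0 → ([] : List 𝒲) ∈ S) ∧ (α ≠ 0 → ctx.IIWinsG X S α (ctx.fspan ∅) [])

/-- Game values of the adversarial game `A^α_X` for player II (who plays the integers,
the finite-dimensional subspaces `F_l ⊆ Y_l` and the vectors `y_l`). -/
noncomputable def IIWinsA (X : Set 𝒲) (S : Set (List 𝒲)) :
    Ordinal → Set 𝒲 → Set 𝒲 → List 𝒲 → Prop :=
  WellFounded.fix (C := fun _ : Ordinal => Set 𝒲 → Set 𝒲 → List 𝒲 → Prop)
    Ordinal.lt_wf
    (fun α ih Eacc Facc vec =>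
      ∃ n : ℕ,
        ∀ E : Set 𝒲, ctx.IsFinDimIn E X → ctx.NatLt n E →
        ∀ x : 𝒲, x ≠ 0 → x ∈ ctx.fspan (Eacc ∪ E) →
        ∀ Y : Set 𝒲, ctx.IsBlockSubspaceOf Y X →
        ∀ ξ : Ordinal, ∀ hξ : ξ < α,
          ∃ F : Set 𝒲, ctx.IsFinDimIn F Y ∧
            ∃ y : 𝒲, y ≠ 0 ∧ y ∈ ctx.fspan (Facc ∪ F) ∧
              (ξ = 0 → vec ++ [x, y] ∈ S) ∧
              (ξ ≠ 0 → ih ξ hξ (ctx.fspan (Eacc ∪ E)) (ctx.fspan (Facc ∪ F))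
                (vec ++ [x, y])))

/-- Player II has a strategy in the adversarial game `A^α_X` to play in `S`. -/
noncomputable def IIStratA (X : Set 𝒲) (α : Ordinal) (S : Set (List 𝒲)) : Prop :=
  (α = 0 → ([] : List 𝒲) ∈ S) ∧
  (α ≠ 0 → ctx.IIWinsA X S α (ctx.fspan ∅) (ctx.fspan ∅) [])

/-- Game values of the adversarial game `B^α_X` for player I (who plays the
finite-dimensional subspaces `E_l ⊆ Y_l`, the vectors `x_l`, the integers and the
ordinals). -/
noncomputable def IWinsB (X : Set 𝒲) (S : Set (List 𝒲)) :
    Ordinal → Set 𝒲 → Set 𝒲 → List 𝒲 → Prop :=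
  WellFounded.fix (C := fun _ : Ordinal => Set 𝒲 → Set 𝒲 → List 𝒲 → Prop)
    Ordinal.lt_wf
    (fun α ih Eacc Facc vec =>
      ∀ Y : Set 𝒲, ctx.IsBlockSubspaceOf Y X →
        ∃ E : Set 𝒲, ctx.IsFinDimIn E Y ∧
          ∃ x : 𝒲, x ≠ 0 ∧ x ∈ ctx.fspan (Eacc ∪ E) ∧
            ∃ n : ℕ, ∃ ξ : Ordinal, ∃ hξ : ξ < α,
              ∀ F : Set 𝒲, ctx.IsFinDimIn F X → ctx.NatLt n F →
              ∀ y : 𝒲, y ≠ 0 → y ∈ ctx.fspan (Facc ∪ F) →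
                (ξ = 0 → vec ++ [x, y] ∈ S) ∧
                (ξ ≠ 0 → ih ξ hξ (ctx.fspan (Eacc ∪ E)) (ctx.fspan (Facc ∪ F))
                  (vec ++ [x, y])))

/-- Player I has a strategy in the adversarial game `B^α_X` to play in `S`. -/
noncomputable def IStratB (X : Set 𝒲) (α : Ordinal) (S : Set (List 𝒲)) : Prop :=
  (α = 0 → ([] : List 𝒲) ∈ S) ∧
  (α ≠ 0 → ctx.IWinsB X S α (ctx.fspan ∅) (ctx.fspan ∅) [])

/-- Game values of the adversarial game `B^α_X` for player II (who plays the block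
subspaces `Y_l`, the finite-dimensional subspaces `F_l` and the vectors `y_l`). -/
noncomputable def IIWinsB (X : Set 𝒲) (S : Set (List 𝒲)) :
    Ordinal → Set 𝒲 → Set 𝒲 → List 𝒲 → Prop :=
  WellFounded.fix (C := fun _ : Ordinal => Set 𝒲 → Set 𝒲 → List 𝒲 → Prop)
    Ordinal.lt_wf
    (fun α ih Eacc Facc vec =>
      ∃ Y : Set 𝒲, ctx.IsBlockSubspaceOf Y X ∧
        ∀ E : Set 𝒲, ctx.IsFinDimIn E Y →
        ∀ x : 𝒲, x ≠ 0 → x ∈ ctx.fspan (Eacc ∪ E) →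
        ∀ n : ℕ, ∀ ξ : Ordinal, ∀ hξ : ξ < α,
          ∃ F : Set 𝒲, ctx.IsFinDimIn F X ∧ ctx.NatLt n F ∧
            ∃ y : 𝒲, y ≠ 0 ∧ y ∈ ctx.fspan (Facc ∪ F) ∧
              (ξ = 0 → vec ++ [x, y] ∈ S) ∧
              (ξ ≠ 0 → ih ξ hξ (ctx.fspan (Eacc ∪ E)) (ctx.fspan (Facc ∪ F))
                (vec ++ [x, y])))

/-- Player II has a strategy in the adversarial game `B^α_X` to play in `S`. -/
noncomputable def IIStratB (X : Set 𝒲) (α : Ordinal) (S : Set (List 𝒲)) : Prop :=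
  (α = 0 → ([] : List 𝒲) ∈ S) ∧
  (α ≠ 0 → ctx.IIWinsB X S α (ctx.fspan ∅) (ctx.fspan ∅) [])

end Frame

end Rosendal

namespace Rosendal

namespace Frame

variable {𝒲 : Type} [NormedAddCommGroup 𝒲] [NormedSpace ℝ 𝒲] (ctx : Frame 𝒲)

theorem fspan_eq (S : Set 𝒲) : ctx.fspan S = (Submodule.span ctx.𝔽 S : Set 𝒲) := by
  ext v
  constructor
  · rintro ⟨t, ht, c, hc, rfl⟩
    refine Submodule.sum_mem _ fun w hw => ?_
    exact Submodule.smul_mem _ (⟨c w, hc w⟩ : ctx.𝔽) (Submodule.subset_span (ht hw))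
  · intro h
    obtain ⟨f, t, ht, -, rfl⟩ := Submodule.mem_span_iff_exists_finset_subset.1 h
    exact ⟨t, ht, fun w => (f w : ℝ), fun w => (f w).2, rfl⟩

theorem fspan_subset {S X : Set 𝒲} (hX : ctx.fspan X = X) (h : S ⊆ X) : ctx.fspan S ⊆ X := by
  rw [← hX, fspan_eq, fspan_eq]
  exact Submodule.span_mono h

theorem subset_fspan (S : Set 𝒲) : S ⊆ ctx.fspan S := by
  rw [fspan_eq]; exact Submodule.subset_span

theorem fspan_idem (S : Set 𝒲) : ctx.fspan (ctx.fspan S) = ctx.fspan S := by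
  rw [fspan_eq, fspan_eq, Submodule.span_eq]

theorem linInd : LinearIndependent ℝ ctx.e := by
  rw [linearIndependent_iff']
  intro s g hg i hi
  have key : ∀ a : ℕ → ℝ, (∀ j, j ∉ s → a j = 0) → ∑ i ∈ s, a i • ctx.e i = 0 →
      Tendsto (fun N => ∑ i ∈ Finset.range N, a i • ctx.e i) atTop (𝓝 0) := by
    intro a ha h0
    apply tendsto_const_nhds.congr'
    filter_upwards [eventually_ge_atTop (s.sup id + 1)] with N hN
    rw [← h0]
    apply Finset.sum_subset
    · intro j hj
      have := Finset.le_sup (f := id) hj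
      simp only [id] at this
      rw [Finset.mem_range]; omega
    · intro j _ hj
      rw [ha j hj, zero_smul]
  classical
  obtain ⟨a, -, hu⟩ := ctx.basis 0
  have h1 := hu (fun j => if j ∈ s then g j else 0) (key _ (by intro j hj; simp [hj]) (by
    rw [← hg]; exact Finset.sum_congr rfl (fun j hj => by simp [hj])))
  have h2 := hu (fun _ => 0) (key _ (by simp) (by simp))
  have := congrFun (h1.trans h2.symm) i
  simpa [hi] using this

/-- vectors supported after `m` -/
def G (m : ℕ) : Submodule ℝ 𝒲 := Submodule.span ℝ (ctx.e '' Set.Ioi m)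

theorem suppIn_mem {x : 𝒲} {s : Finset ℕ} {A : Set ℕ} (h : SuppIn ctx.e x s)
    (hs : ∀ i ∈ s, i ∈ A) : x ∈ Submodule.span ℝ (ctx.e '' A) := by
  obtain ⟨a, rfl⟩ := h
  refine Submodule.sum_mem _ fun i hi => Submodule.smul_mem _ _ (Submodule.subset_span ?_)
  exact ⟨i, hs i hi, rfl⟩

theorem mem_G {m : ℕ} {x : 𝒲} :
    x ∈ ctx.G m ↔ ∃ s : Finset ℕ, SuppIn ctx.e x s ∧ ∀ i ∈ s, m < i := by
  constructor
  · intro h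
    obtain ⟨l, hl, rfl⟩ := (Finsupp.mem_span_image_iff_linearCombination ℝ).1 h
    exact ⟨l.support, ⟨l, rfl⟩, fun i hi => hl hi⟩
  · rintro ⟨s, h, hs⟩
    exact ctx.suppIn_mem h hs

theorem natLt_iff {n : ℕ} {F : Set 𝒲} : ctx.NatLt n F ↔ ∀ x ∈ F, x ∈ ctx.G n := by
  simp only [NatLt, mem_G]

theorem G_anti {m n : ℕ} (h : m ≤ n) : ctx.G n ≤ ctx.G m :=
  Submodule.span_mono (Set.image_mono (Set.Ioi_subset_Ioi h))

theorem natLt_mono {m n : ℕ} (h : m ≤ n) {F : Set 𝒲} (hF : ctx.NatLt n F) : ctx.NatLt m F := by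
  rw [natLt_iff] at *
  exact fun x hx => ctx.G_anti h (hF x hx)

theorem fspan_G {m : ℕ} {S : Set 𝒲} (h : ∀ x ∈ S, x ∈ ctx.G m) :
    ∀ x ∈ ctx.fspan S, x ∈ ctx.G m := by
  rintro x ⟨t, ht, c, -, rfl⟩
  exact Submodule.sum_mem _ fun w hw => Submodule.smul_mem _ _ (h w (ht hw))

/-- `Y ⊆* X` -/
def ASub (Y X : Set 𝒲) : Prop := ∃ m, ∀ v ∈ Y, v ∈ ctx.G m → v ∈ X

theorem finDim_sub {Y X E : Set 𝒲} {m n : ℕ} (h : ∀ v ∈ Y, v ∈ ctx.G m → v ∈ X)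
    (hmn : m ≤ n) (hE : ctx.IsFinDimIn E Y) (hn : ctx.NatLt n E) : ctx.IsFinDimIn E X := by
  obtain ⟨t, ht, rfl⟩ := hE
  refine ⟨t, fun v hv => h v (ht hv) ?_, rfl⟩
  exact ctx.G_anti hmn (ctx.natLt_iff.1 hn v (ctx.subset_fspan _ hv))

theorem finDim_mono {Y X E : Set 𝒲} (h : Y ⊆ X) (hE : ctx.IsFinDimIn E Y) :
    ctx.IsFinDimIn E X := by
  obtain ⟨t, ht, rfl⟩ := hE
  exact ⟨t, ht.trans h, rfl⟩

theorem blockSub_closed {Y X : Set 𝒲} (h : ctx.IsBlockSubspaceOf Y X) : ctx.fspan Y = Y := by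
  obtain ⟨y, -, -, rfl⟩ := h
  exact ctx.fspan_idem _

theorem blockSub_subset {Y X : Set 𝒲} (hX : ctx.fspan X = X) (h : ctx.IsBlockSubspaceOf Y X) :
    Y ⊆ X := by
  obtain ⟨y, -, hy, rfl⟩ := h
  apply ctx.fspan_subset hX
  rintro _ ⟨n, rfl⟩; exact hy n

theorem blockSub_mono {Z Y X : Set 𝒲} (h : Y ⊆ X) (hZ : ctx.IsBlockSubspaceOf Z Y) :
    ctx.IsBlockSubspaceOf Z X := by
  obtain ⟨y, hb, hy, rfl⟩ := hZ
  exact ⟨y, hb, fun n => h (hy n), rfl⟩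

theorem blockSub_refl {Y X : Set 𝒲} (h : ctx.IsBlockSubspaceOf Y X) :
    ctx.IsBlockSubspaceOf Y Y := by
  obtain ⟨y, hb, hy, rfl⟩ := h
  exact ⟨y, hb, fun n => ctx.subset_fspan _ ⟨n, rfl⟩, rfl⟩

theorem tail {Y X : Set 𝒲} (h : ctx.IsBlockSubspaceOf Y X) (m : ℕ) :
    ∃ Z, ctx.IsBlockSubspaceOf Z Y ∧ Z ⊆ Y ∧ ∀ v ∈ Z, v ∈ ctx.G m := by
  have hc := ctx.blockSub_closed h
  obtain ⟨y, ⟨hy1, hy2, D, hD, hlt⟩, hy, rfl⟩ := h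
  have hne : ∀ n, (D n).Nonempty := by
    intro n
    rw [Finset.nonempty_iff_ne_empty]
    intro h0
    obtain ⟨a, ha⟩ := hD n
    rw [h0] at ha
    exact hy2 n (by simpa using ha)
  have hge : ∀ n, ∀ i ∈ D n, n ≤ i := by
    intro n
    induction n with
    | zero => simp
    | succ n ih =>
      intro i hi
      obtain ⟨j, hj⟩ := hne n
      have := hlt n j hj i hi
      have := ih j hj
      omega
  have hb : ctx.IsBlockSubspaceOf (ctx.fspan (Set.range fun n => y (m + 1 + n)))
      (ctx.fspan (Set.range y)) :=
    ⟨fun n => y (m + 1 + n), ⟨fun n => hy1 _, fun n => hy2 _, fun n => D (m + 1 + n),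
      fun n => hD _, fun n => hlt (m + 1 + n)⟩, fun n => ctx.subset_fspan _ ⟨_, rfl⟩, rfl⟩
  refine ⟨_, hb, ctx.blockSub_subset hc hb, ?_⟩
  apply ctx.fspan_G
  rintro _ ⟨n, rfl⟩
  rw [mem_G]
  refine ⟨_, hD _, fun i hi => ?_⟩
  have := hge _ i hi
  omega

theorem tail_sub {Z Y X : Set 𝒲} {m : ℕ} (h : ∀ v ∈ Y, v ∈ ctx.G m → v ∈ X)
    (hY : ctx.fspan Y = Y) (hZ : ctx.IsBlockSubspaceOf Z Y) :
    ∃ Z', ctx.IsBlockSubspaceOf Z' Z ∧ Z' ⊆ Z ∧ ctx.IsBlockSubspaceOf Z' X := by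
  obtain ⟨Z', h1, h2, h3⟩ := ctx.tail hZ m
  refine ⟨Z', h1, h2, ?_⟩
  have hs := ctx.blockSub_subset hY hZ
  have hr := ctx.blockSub_refl h1
  exact ctx.blockSub_mono (fun v hv => h v (hs (h2 hv)) (h3 v hv)) hr

theorem pick {X V : Set 𝒲} (h : ctx.IsBlockSubspaceOf X V) (m : ℕ) :
    ∃ y ∈ X, y ∈ ctx.W ∧ y ≠ 0 ∧ ∃ s, SuppIn ctx.e y s ∧ ∀ i ∈ s, m < i := by
  obtain ⟨Z, hZ, hs, hG⟩ := ctx.tail h m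
  obtain ⟨z, ⟨hz1, hz2, -⟩, hz, rfl⟩ := hZ
  exact ⟨z 0, hz 0, hz1 0, hz2 0, ctx.mem_G.1 (hG _ (ctx.subset_fspan _ ⟨0, rfl⟩))⟩

theorem diag (X : ℕ → Set 𝒲) (hX : ∀ n, ∃ V, ctx.IsBlockSubspaceOf (X n) V)
    (hanti : Antitone X) :
    ∃ Y, ctx.IsBlockSubspaceOf Y (X 0) ∧ ∀ i, ctx.ASub Y (X i) := by
  choose V hV using hX
  have hp := fun n => ctx.pick (hV n)
  choose p hpX hpW hp0 D hD hDm using hp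
  let m : ℕ → ℕ := fun n => Nat.rec 0 (fun n k => max k ((D n k).sup id)) n
  have hm : ∀ n, m (n + 1) = max (m n) ((D n (m n)).sup id) := fun n => rfl
  have hle : ∀ n, ∀ i ∈ D n (m n), i ≤ m (n + 1) := by
    intro n i hi
    rw [hm]
    exact le_max_of_le_right (Finset.le_sup (f := id) hi)
  have hmono : Monotone m := monotone_nat_of_le_succ fun n => by rw [hm]; exact le_max_left _ _
  have hb : ctx.IsBlockSeq (fun n => p n (m n)) :=
    ⟨fun n => hpW _ _, fun n => hp0 _ _, fun n => D n (m n), fun n => hD _ _,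
      fun n i hi j hj => lt_of_le_of_lt (hle n i hi) (hDm _ _ j hj)⟩
  refine ⟨_, ⟨_, hb, fun n => hanti (Nat.zero_le n) (hpX _ _), rfl⟩, fun i => ⟨m i, ?_⟩⟩
  intro v hv hvG
  have hc := ctx.blockSub_closed (hV i)
  rw [fspan_eq] at hc
  have hdec : ∃ u ∈ Submodule.span ℝ (ctx.e '' Set.Iic (m i)),
      ∃ w ∈ Submodule.span ctx.𝔽 (X i), w ∈ ctx.G (m i) ∧ v = u + w := by
    clear hvG
    rw [fspan_eq] at hv
    induction hv using Submodule.span_induction with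
    | mem x hx =>
      obtain ⟨n, rfl⟩ := hx
      rcases lt_or_ge n i with h | h
      · refine ⟨p n (m n), ?_, 0, Submodule.zero_mem _, Submodule.zero_mem _, by simp⟩
        exact ctx.suppIn_mem (hD _ _) fun j hj => (hle n j hj).trans (hmono h)
      · refine ⟨0, Submodule.zero_mem _, p n (m n), Submodule.subset_span (hanti h (hpX _ _)),
          ?_, by simp⟩
        exact ctx.G_anti (hmono h) (ctx.mem_G.2 ⟨_, hD _ _, hDm _ _⟩)
    | zero => exact ⟨0, Submodule.zero_mem _, 0, Submodule.zero_mem _, Submodule.zero_mem _,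
        by simp⟩
    | add x y _ _ hx hy =>
      obtain ⟨u, hu, w, hw, hwG, rfl⟩ := hx
      obtain ⟨u', hu', w', hw', hwG', rfl⟩ := hy
      exact ⟨u + u', Submodule.add_mem _ hu hu', w + w', Submodule.add_mem _ hw hw',
        Submodule.add_mem _ hwG hwG', by abel⟩
    | smul c x _ hx =>
      obtain ⟨u, hu, w, hw, hwG, rfl⟩ := hx
      exact ⟨(c : ℝ) • u, Submodule.smul_mem _ _ hu, c • w, Submodule.smul_mem _ _ hw,
        Submodule.smul_mem _ (c : ℝ) hwG, smul_add (c : ℝ) u w⟩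
  obtain ⟨u, hu, w, hw, hwG, rfl⟩ := hdec
  have hu' : u ∈ ctx.G (m i) := by
    simpa using Submodule.sub_mem _ hvG hwG
  have hd : Disjoint (Submodule.span ℝ (ctx.e '' Set.Iic (m i))) (ctx.G (m i)) :=
    ctx.linInd.disjoint_span_image (Set.Iic_disjoint_Ioi le_rfl)
  have hu0 : u = 0 := by
    simpa using (Submodule.disjoint_def.1 hd) u hu hu'
  rw [hu0, zero_add]
  rw [← hc]; exact hw

theorem fusion (Q : ℕ → Set 𝒲 → Prop)
    (hQ : ∀ i Y X, ctx.fspan Y = Y → ctx.ASub Y X → Q i X → Q i Y)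
    {X V : Set 𝒲} (hX : ctx.IsBlockSubspaceOf X V) :
    ∃ Y, ctx.IsBlockSubspaceOf Y X ∧
      ∀ i, Q i Y ∨ ∀ Z, ctx.IsBlockSubspaceOf Z Y → ¬ Q i Z := by
  have step : ∀ (i : ℕ) (A : {A : Set 𝒲 // ctx.IsBlockSubspaceOf A A}),
      ∃ B : {A : Set 𝒲 // ctx.IsBlockSubspaceOf A A}, B.1 ⊆ A.1 ∧
        (Q i B.1 ∨ ∀ Z, ctx.IsBlockSubspaceOf Z A.1 → ¬ Q i Z) := by
    intro i A
    by_cases h : ∃ Z, ctx.IsBlockSubspaceOf Z A.1 ∧ Q i Z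
    · obtain ⟨Z, hZ, hq⟩ := h
      exact ⟨⟨Z, ctx.blockSub_refl hZ⟩, ctx.blockSub_subset (ctx.blockSub_closed A.2) hZ, .inl hq⟩
    · push Not at h
      exact ⟨A, subset_rfl, .inr h⟩
  choose B hBs hB using step
  let S : ℕ → {A : Set 𝒲 // ctx.IsBlockSubspaceOf A A} :=
    fun n => Nat.rec ⟨X, ctx.blockSub_refl hX⟩ (fun n A => B n A) n
  have hS : ∀ n, S (n + 1) = B n (S n) := fun n => rfl
  obtain ⟨Y, hY, hYS⟩ := ctx.diag (fun n => (S n).1) (fun n => ⟨_, (S n).2⟩)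
    (antitone_nat_of_succ_le fun n => by rw [hS]; exact hBs _ _)
  refine ⟨Y, hY, fun i => ?_⟩
  have hYc := ctx.blockSub_closed hY
  rcases hB i (S i) with h | h
  · exact .inl (hQ i _ _ hYc (hYS (i + 1)) h)
  · right
    intro Z hZ hq
    obtain ⟨m, hm⟩ := hYS i
    obtain ⟨Z', h1, h2, h3⟩ := ctx.tail_sub hm hYc hZ
    exact h Z' h3 (hQ i _ _ (ctx.blockSub_closed h1) ⟨0, fun v hv _ => h2 hv⟩ hq)

theorem fusionS {ι : Type*} [Nonempty ι] {S : Set ι} (hS : S.Countable) (Q : ι → Set 𝒲 → Prop)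
    (hQ : ∀ i Y X, ctx.fspan Y = Y → ctx.ASub Y X → Q i X → Q i Y)
    {X V : Set 𝒲} (hX : ctx.IsBlockSubspaceOf X V) :
    ∃ Y, ctx.IsBlockSubspaceOf Y X ∧
      ∀ i ∈ S, Q i Y ∨ ∀ Z, ctx.IsBlockSubspaceOf Z Y → ¬ Q i Z := by
  obtain ⟨f, hf⟩ := Set.countable_iff_exists_subset_range.1 hS
  obtain ⟨Y, hY, h⟩ := ctx.fusion (fun n => Q (f n)) (fun i => hQ (f i)) hX
  refine ⟨Y, hY, fun i hi => ?_⟩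
  obtain ⟨n, rfl⟩ := hf hi
  exact h n

theorem IIWinsA_iff (X : Set 𝒲) (S : Set (List 𝒲)) (α : Ordinal) (Eacc Facc : Set 𝒲)
    (vec : List 𝒲) : ctx.IIWinsA X S α Eacc Facc vec ↔
      ∃ n : ℕ,
        ∀ E : Set 𝒲, ctx.IsFinDimIn E X → ctx.NatLt n E →
        ∀ x : 𝒲, x ≠ 0 → x ∈ ctx.fspan (Eacc ∪ E) →
        ∀ Y : Set 𝒲, ctx.IsBlockSubspaceOf Y X →
        ∀ ξ : Ordinal, ξ < α →
          ∃ F : Set 𝒲, ctx.IsFinDimIn F Y ∧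
            ∃ y : 𝒲, y ≠ 0 ∧ y ∈ ctx.fspan (Facc ∪ F) ∧
              (ξ = 0 → vec ++ [x, y] ∈ S) ∧
              (ξ ≠ 0 → ctx.IIWinsA X S ξ (ctx.fspan (Eacc ∪ E)) (ctx.fspan (Facc ∪ F))
                (vec ++ [x, y])) := by
  rw [IIWinsA, WellFounded.fix_eq]

theorem IWinsB_iff (X : Set 𝒲) (S : Set (List 𝒲)) (α : Ordinal) (Eacc Facc : Set 𝒲)
    (vec : List 𝒲) : ctx.IWinsB X S α Eacc Facc vec ↔
      ∀ Y : Set 𝒲, ctx.IsBlockSubspaceOf Y X →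
        ∃ E : Set 𝒲, ctx.IsFinDimIn E Y ∧
          ∃ x : 𝒲, x ≠ 0 ∧ x ∈ ctx.fspan (Eacc ∪ E) ∧
            ∃ n : ℕ, ∃ ξ : Ordinal, ∃ _ : ξ < α,
              ∀ F : Set 𝒲, ctx.IsFinDimIn F X → ctx.NatLt n F →
              ∀ y : 𝒲, y ≠ 0 → y ∈ ctx.fspan (Facc ∪ F) →
                (ξ = 0 → vec ++ [x, y] ∈ S) ∧
                (ξ ≠ 0 → ctx.IWinsB X S ξ (ctx.fspan (Eacc ∪ E)) (ctx.fspan (Facc ∪ F))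
                  (vec ++ [x, y])) := by
  rw [IWinsB, WellFounded.fix_eq]

theorem IIWinsA_her {X Y : Set 𝒲} (S : Set (List 𝒲)) (hY : ctx.fspan Y = Y) (h : ctx.ASub Y X)
    (α : Ordinal) : ∀ (Eacc Facc : Set 𝒲) (vec : List 𝒲),
    ctx.IIWinsA X S α Eacc Facc vec → ctx.IIWinsA Y S α Eacc Facc vec := by
  obtain ⟨m, hm⟩ := h
  induction α using WellFoundedLT.induction with
  | ind α ih =>
  intro Eacc Facc vec hw
  rw [IIWinsA_iff] at hw ⊢
  obtain ⟨n, hn⟩ := hw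
  refine ⟨max n m, fun E hE hnE x hx hxE Z hZ ξ hξ => ?_⟩
  obtain ⟨Z', h1, h2, h3⟩ := ctx.tail_sub hm hY hZ
  obtain ⟨F, hF, y, hy, hyF, hz, hs⟩ := hn E (ctx.finDim_sub hm (le_max_right _ _) hE hnE)
    (ctx.natLt_mono (le_max_left _ _) hnE) x hx hxE Z' h3 ξ hξ
  exact ⟨F, ctx.finDim_mono h2 hF, y, hy, hyF, hz, fun h0 => ih ξ hξ _ _ _ (hs h0)⟩

theorem W_countable : (ctx.W).Countable := by
  have : Countable ctx.𝔽 := ctx.countable.to_subtype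
  rw [W, fspan_eq, ← Finsupp.range_linearCombination]
  exact Set.countable_range (Finsupp.linearCombination ctx.𝔽 ctx.e)

theorem finDim_countable : {E | ctx.IsFinDimIn E ctx.W}.Countable := by
  have h := (Set.countable_ofPred_finite_subset ctx.W_countable).image ctx.fspan
  refine h.mono ?_
  rintro E ⟨t, ht, rfl⟩
  exact ⟨t, ⟨t.finite_toSet, ht⟩, rfl⟩

theorem list_countable : {l : List 𝒲 | ∀ v ∈ l, v ∈ ctx.W}.Countable := by
  have : Countable ctx.W := ctx.W_countable.to_subtype
  refine (Set.countable_range (List.map (Subtype.val : ctx.W → 𝒲))).mono ?_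
  intro l hl
  rw [Set.range_list_map_coe]
  exact hl

theorem finDim_union {E F : Set 𝒲} (hE : ctx.IsFinDimIn E ctx.W) (hF : ctx.IsFinDimIn F ctx.W) :
    ctx.IsFinDimIn (ctx.fspan (E ∪ F)) ctx.W := by
  classical
  obtain ⟨s, hs, rfl⟩ := hE
  obtain ⟨t, ht, rfl⟩ := hF
  refine ⟨s ∪ t, by simp [hs, ht], ?_⟩
  simp only [fspan_eq, Submodule.span_union, Finset.coe_union, Submodule.span_eq]

theorem finDim_subset {E : Set 𝒲} (hE : ctx.IsFinDimIn E ctx.W) : E ⊆ ctx.W := by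
  obtain ⟨s, hs, rfl⟩ := hE
  exact ctx.fspan_subset (ctx.fspan_idem _) hs

theorem Iio_countable {α : Ordinal} (hα : α < (Cardinal.aleph 1).ord) :
    (Set.Iio α).Countable := by
  rw [Cardinal.lt_ord, Cardinal.lt_aleph_one_iff] at hα
  rw [← Cardinal.le_aleph0_iff_set_countable, Cardinal.mk_Iio_ordinal]
  exact Cardinal.lift_le_aleph0.2 hα

end Frame

end Rosendal

namespace Rosendal

/-- Ramsey determinacy of adversarial `α`-games.  For a countable
ordinal `α` and any set `T` of finite sequences of vectors, every block subspace
`X ⊆ W` contains a block subspace `Y` such that either II has a strategy in `A^α_Y` to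
play in `T`, or I has a strategy in `B^α_Y` to play in the complement of `T`. -/
theorem adversarial_determinacy
    (𝒲 : Type) [NormedAddCommGroup 𝒲] [NormedSpace ℝ 𝒲] (ctx : Frame 𝒲)
    (α : Ordinal) (hα : α < (Cardinal.aleph 1).ord) (T : Set (List 𝒲))
    (X : Set 𝒲) (hX : ctx.IsBlockSubspace X) :
    ∃ Y : Set 𝒲, ctx.IsBlockSubspaceOf Y X ∧
      (ctx.IIStratA Y α T ∨ ctx.IStratB Y α Tᶜ) := by
  have hXW : X ⊆ ctx.W := ctx.blockSub_subset (ctx.fspan_idem _) hX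
  have hIic : (Set.Iic α).Countable := by
    rw [← Set.Iio_insert]; exact (Frame.Iio_countable hα).insert α
  have hC := ctx.finDim_countable
  have hL := ctx.list_countable
  obtain ⟨Y, hY, hYd⟩ := ctx.fusionS
    (S := {E | ctx.IsFinDimIn E ctx.W} ×ˢ {E | ctx.IsFinDimIn E ctx.W} ×ˢ
      {l : List 𝒲 | ∀ v ∈ l, v ∈ ctx.W} ×ˢ Set.Iic α)
    (hC.prod (hC.prod (hL.prod hIic)))
    (fun p Z => ctx.IIWinsA Z T p.2.2.2 p.1 p.2.1 p.2.2.1)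
    (fun i Y X hc h => ctx.IIWinsA_her T hc h _ _ _ _) hX
  have hYc := ctx.blockSub_closed hY
  have hYX : Y ⊆ X := ctx.blockSub_subset (ctx.blockSub_closed hX) hY
  obtain ⟨V, hV, hVd⟩ := ctx.fusionS
    (S := {E | ctx.IsFinDimIn E ctx.W} ×ˢ {E | ctx.IsFinDimIn E ctx.W} ×ˢ
      {l : List 𝒲 | ∀ v ∈ l, v ∈ ctx.W} ×ˢ Set.Iic α ×ˢ ctx.W)
    (hC.prod (hC.prod (hL.prod (hIic.prod ctx.W_countable))))
    (fun p Z => ∃ n, ∀ F, ctx.IsFinDimIn F Z → ctx.NatLt n F → ∀ y : 𝒲, y ≠ 0 →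
      y ∈ ctx.fspan (p.2.1 ∪ F) →
      (p.2.2.2.1 = 0 → p.2.2.1 ++ [p.2.2.2.2, y] ∈ Tᶜ) ∧
      (p.2.2.2.1 ≠ 0 → ∀ Z, ctx.IsBlockSubspaceOf Z Y →
        ¬ ctx.IIWinsA Z T p.2.2.2.1 p.1 (ctx.fspan (p.2.1 ∪ F)) (p.2.2.1 ++ [p.2.2.2.2, y])))
    (by
      rintro i Y X hc ⟨m, hm⟩ ⟨n, hn⟩
      exact ⟨max n m, fun F hF hnF => hn F (ctx.finDim_sub hm (le_max_right _ _) hF hnF)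
        (ctx.natLt_mono (le_max_left _ _) hnF)⟩) hY
  have hVY : V ⊆ Y := ctx.blockSub_subset hYc hV
  have hVc := ctx.blockSub_closed hV
  have hVW : V ⊆ ctx.W := hVY.trans (hYX.trans hXW)
  have hVX : ctx.IsBlockSubspaceOf V X := ctx.blockSub_mono hYX hV
  -- the main induction
  have main : ∀ β : Ordinal, ∀ E F : Set 𝒲, ∀ vec : List 𝒲, β ≤ α →
      ctx.IsFinDimIn E ctx.W → ctx.IsFinDimIn F ctx.W → (∀ v ∈ vec, v ∈ ctx.W) →
      (∀ Z, ctx.IsBlockSubspaceOf Z Y → ¬ ctx.IIWinsA Z T β E F vec) →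
      ctx.IWinsB V Tᶜ β E F vec := by
    intro β
    induction β using WellFoundedLT.induction with
    | ind β ih =>
    intro Ea Fa vec hβ hEa hFa hvec hbad
    rw [Frame.IWinsB_iff]
    intro Z hZ
    have hZV : Z ⊆ V := ctx.blockSub_subset hVc hZ
    have hZY : ctx.IsBlockSubspaceOf Z Y := ctx.blockSub_mono hVY hZ
    have hn := hbad Z hZY
    rw [Frame.IIWinsA_iff] at hn
    push Not at hn
    obtain ⟨E, hE, -, x, hx, hxE, U, hU, ξ, hξ, hF⟩ := hn 0
    have hUZ : U ⊆ Z := ctx.blockSub_subset (ctx.blockSub_closed hZ) hU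
    have hξα : ξ ≤ α := hξ.le.trans hβ
    have hE' : ctx.IsFinDimIn (ctx.fspan (Ea ∪ E)) ctx.W :=
      ctx.finDim_union hEa (ctx.finDim_mono (hZV.trans hVW) hE)
    have hxW : x ∈ ctx.W := ctx.finDim_subset hE' hxE
    have hext : ∀ F, ctx.IsFinDimIn F V → ∀ y, y ∈ ctx.fspan (Fa ∪ F) →
        ctx.IsFinDimIn (ctx.fspan (Fa ∪ F)) ctx.W ∧ ∀ v ∈ vec ++ [x, y], v ∈ ctx.W := by
      intro F hF y hy
      have h1 := ctx.finDim_union hFa (ctx.finDim_mono hVW hF)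
      refine ⟨h1, ?_⟩
      intro v hv
      simp only [List.mem_append, List.mem_cons, List.not_mem_nil, or_false] at hv
      rcases hv with hv | rfl | rfl
      · exact hvec v hv
      · exact hxW
      · exact ctx.finDim_subset h1 hy
    refine ⟨E, hE, x, hx, hxE, ?_⟩
    rcases hVd (ctx.fspan (Ea ∪ E), Fa, vec, ξ, x) ⟨hE', hFa, hvec, hξα, hxW⟩ with h | h
    · obtain ⟨n, h⟩ := h
      refine ⟨n, ξ, hξ, fun F hF hnF y hy hyF => ?_⟩
      obtain ⟨h0, h1⟩ := h F hF hnF y hy hyF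
      obtain ⟨h2, h3⟩ := hext F hF y hyF
      exact ⟨h0, fun hne => ih ξ hξ _ _ _ hξα hE' h2 h3 (h1 hne)⟩
    · exfalso
      refine h U (ctx.blockSub_mono hZV hU) ⟨0, fun F hFU _ y hy hyF => ?_⟩
      have h4 := hF F hFU y hy hyF
      obtain ⟨h2, h3⟩ := hext F (ctx.finDim_mono (hUZ.trans hZV) hFU) y hyF
      by_cases hξ0 : ξ = 0
      · refine ⟨fun _ hT => ?_, fun h => absurd hξ0 h⟩
        exact (h4 (fun _ => hT)).1 hξ0
      · refine ⟨fun h => absurd h hξ0, fun _ => ?_⟩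
        obtain ⟨-, h5⟩ := h4 (fun h => absurd h hξ0)
        rcases hYd (ctx.fspan (Ea ∪ E), ctx.fspan (Fa ∪ F), vec ++ [x, y], ξ)
          ⟨hE', h2, h3, hξα⟩ with h6 | h6
        · exact absurd (ctx.IIWinsA_her T (ctx.blockSub_closed hZ)
            ⟨0, fun v hv _ => hVY (hZV hv)⟩ _ _ _ _ h6) h5
        · exact h6
  have h0 : ctx.IsFinDimIn (ctx.fspan ∅) ctx.W := ⟨∅, by simp, by simp⟩
  refine ⟨V, hVX, ?_⟩
  by_cases hα0 : α = 0
  · by_cases hT : ([] : List 𝒲) ∈ T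
    · exact .inl ⟨fun _ => hT, fun h => absurd hα0 h⟩
    · exact .inr ⟨fun _ => hT, fun h => absurd hα0 h⟩
  · rcases hYd (ctx.fspan ∅, ctx.fspan ∅, [], α) ⟨h0, h0, by simp, le_refl α⟩ with h | h
    · exact .inl ⟨fun h => absurd h hα0, fun _ =>
        ctx.IIWinsA_her T hVc ⟨0, fun v hv _ => hVY hv⟩ _ _ _ _ h⟩
    · exact .inr ⟨fun h => absurd h hα0, fun _ => main α _ _ _ le_rfl h0 h0 (by simp) h⟩

end Rosendal
end
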